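/- arXiv:math/0302037 — 2 statements merged into one kernel-verified Lean document; each statement's English description precedes it below -/
import Mathlib

section
/- For 0 ≤ l ≤ n one has X_n^{(l)} = {r_{i_1} r_{i_2} ⋯ r_{i_l} : 1 ≤ i_1 < i_2 < ⋯ < i_l ≤ n}; moreover ℓ(r_{i_1} r_{i_2} ⋯ r_{i_l}) = i_1 + i_2 + ⋯ + i_l for 1 ≤ i_1 < ⋯ < i_l ≤ n, and consequently |X_n^{(l)}| = C(n,l), the binomial coefficient n choose l. -/
open scoped Classical

noncomputable section

/-! ## The hyperoctahedral group `W_n` as signed permutations of `I_n ⊆ ℤ` -/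

abbrev P := Equiv.Perm ℤ

/-- `W_n` : permutations of `I_n = {±1, …, ±n}` commuting with `i ↦ -i`,
realized as permutations of `ℤ` fixing everything outside `I_n`. -/
def Wset (n : ℕ) : Set P :=
  {π | (∀ i : ℤ, π (-i) = - π i) ∧ ∀ i : ℤ, (n : ℤ) < |i| → π i = i}

/-- the generator `t = (1, -1)` -/
def tgen : P := Equiv.swap 1 (-1)

/-- the generator `s_i = (i, i+1)(-i, -(i+1))` -/
def sgen (i : ℕ) : P :=
  Equiv.swap (i : ℤ) ((i : ℤ) + 1) * Equiv.swap (-(i : ℤ)) (-((i : ℤ) + 1))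

/-- the generating set `S_n = {t, s_1, …, s_{n-1}}` -/
def Sset (n : ℕ) : Set P := insert tgen (sgen '' Set.Icc 1 (n - 1))

/-- the length function of `W_n` with respect to `S_n` -/
def len (n : ℕ) (w : P) : ℕ :=
  sInf {k | ∃ l : List P, (∀ g ∈ l, g ∈ Sset n) ∧ l.prod = w ∧ l.length = k}

/-- number of occurrences of `tgen` in a list -/
def tcount (l : List P) : ℕ := (l.map (fun g => if g = tgen then 1 else 0)).sum

/-- `ℓ_t(w)` : the number of occurrences of `t` in a (any) reduced expression of `w` -/
def tlen (n : ℕ) (w : P) : ℕ :=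
  sInf {k | ∃ l : List P, (∀ g ∈ l, g ∈ Sset n) ∧ l.prod = w ∧
    l.length = len n w ∧ tcount l = k}

/-- the Bruhat order on `W_n` : `x ≤ y` iff some reduced expression of `y`
has a subword whose product is `x`. -/
def bruhat (n : ℕ) (x y : P) : Prop :=
  ∃ l l' : List P, (∀ g ∈ l, g ∈ Sset n) ∧ l.prod = y ∧ l.length = len n y ∧
    List.Sublist l' l ∧ l'.prod = x

/-! ## Generalized Robinson–Schensted correspondence -/

abbrev Tab := List (List ℕ)

/-- row insertion of `x` into one row; returns the new row and the bumped entry (if any) -/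
def insRow (x : ℕ) : List ℕ → List ℕ × Option ℕ
  | [] => ([x], none)
  | y :: ys =>
    if x < y then (x :: ys, some y)
    else
      let p := insRow x ys
      (y :: p.1, p.2)

/-- Schensted insertion of `x` into a tableau; returns the new tableau
and the (row, column) coordinates of the newly created box. -/
def insTab (x : ℕ) : Tab → Tab × ℕ × ℕ
  | [] => ([[x]], 0, 0)
  | row :: rest =>
    let p := insRow x row
    match p.2 with
    | none => (p.1 :: rest, 0, row.length)
    | some b =>
      let q := insTab b rest
      (p.1 :: q.1, q.2.1 + 1, q.2.2)

/-- place the label `lbl` at the end of row `pos.1` of the recording tableau -/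
def place (lbl : ℕ) (pos : ℕ × ℕ) (T : Tab) : Tab :=
  if pos.1 < T.length then T.set pos.1 ((T.getD pos.1 []) ++ [lbl]) else T ++ [[lbl]]

/-- one step of the generalized RS algorithm: insert `|π(i)|` into `A⁺` or `A⁻`
according to the sign of `π(i)`, and record `i` in the corresponding `B`-tableau. -/
def RSstep (π : P) (st : (Tab × Tab) × (Tab × Tab)) (i : ℕ) : (Tab × Tab) × (Tab × Tab) :=
  let v := (π (i : ℤ)).natAbs
  if 0 < π (i : ℤ) then
    let p := insTab v st.1.1
    ((p.1, st.1.2), (place i p.2 st.2.1, st.2.2))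
  else
    let p := insTab v st.1.2
    ((st.1.1, p.1), (st.2.1, place i p.2 st.2.2))

def RSfull (n : ℕ) (π : P) : (Tab × Tab) × (Tab × Tab) :=
  (((List.range n).map (· + 1)).foldl (RSstep π)) ((([], []), ([], [])))

/-- the insertion bitableau `A_n(π) = (A⁺, A⁻)` -/
def Atab (n : ℕ) (π : P) : Tab × Tab := (RSfull n π).1

/-- the recording bitableau `B_n(π) = (B⁺, B⁻)` -/
def Btab (n : ℕ) (π : P) : Tab × Tab := (RSfull n π).2

/-- `T` is a standard Young tableau -/
def IsStdTab (T : Tab) : Prop :=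
  (∀ row ∈ T, row ≠ [] ∧ row.Chain' (· < ·)) ∧
  T.Chain' (fun r1 r2 => r2.length ≤ r1.length) ∧
  ∀ i j : ℕ, i + 1 < T.length → j < (T.getD (i + 1) []).length →
    (T.getD i []).getD j 0 < (T.getD (i + 1) []).getD j 0

/-- `(T₁, T₂)` is an `n`-standard bitableau: both standard, entry sets disjoint
with union `{1, …, n}` -/
def IsNStdBitab (n : ℕ) (p : Tab × Tab) : Prop :=
  IsStdTab p.1 ∧ IsStdTab p.2 ∧ (p.1.flatten ++ p.2.flatten).Perm (List.range' 1 n)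

/-- the shape of a bitableau -/
def shape2 (p : Tab × Tab) : List ℕ × List ℕ := (p.1.map List.length, p.2.map List.length)

/-! ## Knuth relations -/

/-- `t_i = (i, -i)` -/
def ttgen (i : ℕ) : P := Equiv.swap (i : ℤ) (-(i : ℤ))

/-- `S'_n = S_n ∪ {t_1, …, t_n}` -/
def Sprime (n : ℕ) : Set P := Sset n ∪ (ttgen '' Set.Icc 1 n)

/-- the extended left descent set `L'(w)` -/
def Ldesc (n : ℕ) (w : P) : Set P := {u ∈ Sprime n | len n (u * w) < len n w}

/-- the elementary relation `x —s→ y` -/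
def knuthStep (n : ℕ) (x y : P) : Prop :=
  ∃ i ∈ Set.Icc 1 (n - 1), y = sgen i * x ∧ len n x < len n y ∧
    ¬ (Ldesc n x ⊆ Ldesc n y)

/-- the relation `x ↔_L y` -/
def knuthRel (n : ℕ) : P → P → Prop :=
  Relation.ReflTransGen (fun a b => knuthStep n a b ∨ knuthStep n b a)

/-! ## Parabolic subgroups, coset representatives and the decomposition -/

/-- the parabolic subgroup `𝔖_n = ⟨s_1, …, s_{n-1}⟩` -/
def SymN (n : ℕ) : Subgroup P := Subgroup.closure (sgen '' Set.Icc 1 (n - 1))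

/-- the parabolic subgroup `𝔖_{l, n-l} = ⟨{s_1, …, s_{n-1}} \ {s_l}⟩` -/
def SymLR (n l : ℕ) : Subgroup P :=
  Subgroup.closure (sgen '' {i | 1 ≤ i ∧ i ≤ n - 1 ∧ i ≠ l})

/-- `Y_{l, n-l}` : minimal length representatives of left cosets of `𝔖_{l,n-l}` in `𝔖_n` -/
def Yset (n l : ℕ) : Set P :=
  {w | w ∈ SymN n ∧ ∀ u ∈ SymLR n l, len n w ≤ len n (w * u)}

/-- `X_n` : minimal length representatives of the left cosets `w 𝔖_n` in `W_n` -/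
def Xset (n : ℕ) : Set P :=
  {w | w ∈ Wset n ∧ ∀ u ∈ SymN n, len n w ≤ len n (w * u)}

/-- `X_n^{(l)}` -/
def Xl (n l : ℕ) : Set P := {w ∈ Xset n | tlen n w = l}

/-- `r_1 = t`, `r_{i+1} = s_i r_i` -/
def rgen : ℕ → P
  | 0 => 1
  | 1 => tgen
  | (i + 2) => sgen (i + 1) * rgen (i + 1)

/-- `a_l = r_1 r_2 ⋯ r_l` -/
def al (l : ℕ) : P := ((List.range l).map (fun k => rgen (k + 1))).prod

/-- the set `X_n^{(l)} ⬝ 𝔖_{l, n-l}` -/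
def XSset (n l : ℕ) : Set P := Set.image2 (· * ·) (Xl n l) (SymLR n l : Set P)

/-- `w = a ⬝ a_l ⬝ σ ⬝ b⁻¹` is the canonical decomposition of `w`
(with `a, b ∈ Y_{l,n-l}`, `σ ∈ 𝔖_{l,n-l}` and additivity of lengths) -/
def IsDecomp (n l : ℕ) (w a σ b : P) : Prop :=
  a ∈ Yset n l ∧ b ∈ Yset n l ∧ σ ∈ SymLR n l ∧ w = a * al l * σ * b⁻¹ ∧
    len n w = len n a + len n (al l) + len n σ + len n b

/-- the relation `w ⇝_L w'` -/
def squig (n : ℕ) (w w' : P) : Prop :=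
  ∃ l a σ b a' σ', tlen n w = l ∧ tlen n w' = l ∧
    IsDecomp n l w a σ b ∧ IsDecomp n l w' a' σ' b ∧ knuthRel n σ σ'

/-! ## The two-parameter Iwahori–Hecke algebra and Kazhdan–Lusztig data -/

/-- the ring `A = ℤ[V^{±1}, v^{±1}]`, as the group algebra of `Γ = ℤ × ℤ`
(a monomial `V^i v^j` corresponds to `(i,j) ∈ ℤ × ℤ`). -/
abbrev RR := AddMonoidAlgebra ℤ (ℤ × ℤ)

/-- the monomial with exponent `g` -/
def mono (g : ℤ × ℤ) : RR := AddMonoidAlgebra.single g 1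

/-- `Γ₋` for the lexicographic order with `V ≫ v`: `V^i v^j < 1` -/
def Gneg (g : ℤ × ℤ) : Prop := g.1 < 0 ∨ (g.1 = 0 ∧ g.2 < 0)

/-- an element of `ℤ[Γ₋]` : all monomials lie in `Γ₋` -/
def inNeg (f : RR) : Prop := ∀ g ∈ f.coeff.support, Gneg g

/-- the bar involution of `A`, `V ↦ V⁻¹`, `v ↦ v⁻¹` -/
def barR : RR → RR := fun f => AddMonoidAlgebra.ofCoeff (Finsupp.equivMapDomain (Equiv.neg (ℤ × ℤ)) f.coeff)

/-- the parameter `v_s` of a generator (`v_t = V`, `v_{s_i} = v`) -/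
def vgen (g : P) : RR := if g = tgen then mono (1, 0) else mono (0, 1)

/-- the inverse `v_s⁻¹` of the parameter of a generator -/
def vgenInv (g : P) : RR := if g = tgen then mono (-1, 0) else mono (0, -1)

/-- the free `A`-module with basis indexed by permutations; the Hecke algebra
`H_n` is carried by the elements supported on `W_n`. -/
abbrev HH := P →₀ RR

/-- the standard basis element `T_w` -/
def TT (w : P) : HH := Finsupp.single w 1

/-- All the data attached to the Iwahori–Hecke algebra `H_n` of `W_n` over
`A = ℤ[V^{±1}, v^{±1}]`: the multiplication, the bar involution, the
Kazhdan–Lusztig basis `C_w = Σ_y P*_{y,w} T_y` (for the order on `Γ` given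
by `Γ₊ = {V^i v^j : i > 0} ∪ {v^j : j > 0}`), and Lusztig's `M`-polynomials,
together with their defining properties. -/
structure KLData (n : ℕ) where
  mul : HH → HH → HH
  mul_add_left : ∀ a b c, mul (a + b) c = mul a c + mul b c
  mul_add_right : ∀ a b c, mul a (b + c) = mul a b + mul a c
  mul_smul_left : ∀ (r : RR) a b, mul (r • a) b = r • mul a b
  mul_smul_right : ∀ (r : RR) a b, mul a (r • b) = r • mul a b
  mul_assoc : ∀ a b c, mul (mul a b) c = mul a (mul b c)
  one_mul : ∀ a, mul (TT 1) a = a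
  mul_one : ∀ a, mul a (TT 1) = a
  /-- `T_w T_{w'} = T_{w w'}` when lengths add -/
  T_mul : ∀ w w', w ∈ Wset n → w' ∈ Wset n →
    len n (w * w') = len n w + len n w' → mul (TT w) (TT w') = TT (w * w')
  /-- the quadratic relations `T_s² = T_1 + (v_s - v_s⁻¹) T_s` -/
  T_sq : ∀ g ∈ Sset n, mul (TT g) (TT g) = TT 1 + (vgen g - vgenInv g) • TT g
  bar : HH → HH
  bar_add : ∀ a b, bar (a + b) = bar a + bar b
  bar_smul : ∀ (r : RR) a, bar (r • a) = barR r • bar a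
  bar_mul : ∀ a b, bar (mul a b) = mul (bar a) (bar b)
  /-- `bar T_s = T_s⁻¹ = T_s + (v_s⁻¹ - v_s) T_1` -/
  bar_gen : ∀ g ∈ Sset n, bar (TT g) = TT g + (vgenInv g - vgen g) • TT 1
  /-- the Kazhdan–Lusztig basis element `C_w`, whose coordinate at `T_y` is
  the polynomial `P*_{y,w}` -/
  C : P → HH
  /-- `P*_{w,w} = 1` -/
  C_self : ∀ w, C w w = 1
  /-- `P*_{y,w} = 0` unless `y ≤ w` -/
  C_supp : ∀ w y, C w y ≠ 0 → bruhat n y w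
  /-- `P*_{y,w} ∈ ℤ[Γ₋]` for `y < w` -/
  C_neg : ∀ w y, y ≠ w → inNeg (C w y)
  /-- `C_w` is bar-invariant -/
  C_bar : ∀ w, w ∈ Wset n → bar (C w) = C w
  /-- `M s w` is the finitely supported family `z ↦ M^s_{z,w}` -/
  M : P → P → (P →₀ RR)
  M_supp : ∀ s w z, (M s w) z ≠ 0 → bruhat n z w ∧ z ≠ w ∧ len n (s * z) < len n z
  /-- the symmetry condition `bar M^s_{y,w} = M^s_{y,w}` -/
  M_bar : ∀ s w z, barR ((M s w) z) = (M s w) z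
  /-- the condition `M^s_{y,w} + Σ_{y<z<w, sz<z} P*_{y,z} M^s_{z,w} - v_s P*_{y,w} ∈ ℤ[Γ₋]` -/
  M_cond : ∀ s ∈ Sset n, ∀ y w, len n (s * y) < len n y → len n w < len n (s * w) →
    bruhat n y w → y ≠ w →
    inNeg ((M s w) y + (M s w).sum (fun z m => if z = y then 0 else C z y * m)
      - vgen s * C w y)
  /-- `C_s C_w = C_{sw} + Σ_{z<w, sz<z} M^s_{z,w} C_z` when `sw > w` -/
  mulC_up : ∀ s ∈ Sset n, ∀ w ∈ Wset n, len n w < len n (s * w) →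
    mul (C s) (C w) = C (s * w) + (M s w).sum (fun z m => m • C z)
  /-- `C_s C_w = (v_s + v_s⁻¹) C_w` when `sw < w` -/
  mulC_down : ∀ s ∈ Sset n, ∀ w ∈ Wset n, len n (s * w) < len n w →
    mul (C s) (C w) = (vgen s + vgenInv s) • C w

/-- `P_{y,w} = v_y⁻¹ v_w P*_{y,w}` -/
def Ppoly (n : ℕ) (D : KLData n) (y w : P) : RR :=
  mono ((tlen n w : ℤ) - (tlen n y : ℤ),
        ((len n w : ℤ) - (tlen n w : ℤ)) - ((len n y : ℤ) - (tlen n y : ℤ))) * D.C w y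

/-- the `R`-polynomials : `bar T_w = Σ_y R_{y,w} T_y` -/
def Rpoly {n : ℕ} (D : KLData n) (y w : P) : RR := (D.bar (TT w)) y

/-- `y ≤_{L,s} w` : `C_y` occurs with non-zero coefficient in `C_s C_w`
(expressed in the `C`-basis), for some `s ∈ S_n`, `y ≠ w` -/
def leLelem {n : ℕ} (D : KLData n) (y w : P) : Prop :=
  ∃ s ∈ Sset n, len n w < len n (s * w) ∧ (y = s * w ∨ (D.M s w) y ≠ 0)

/-- the preorder `≤_L` -/
def leL {n : ℕ} (D : KLData n) : P → P → Prop := Relation.ReflTransGen (leLelem D)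

/-- the equivalence `∼_L`; its classes are the left cells -/
def simL {n : ℕ} (D : KLData n) (y w : P) : Prop := leL D y w ∧ leL D w y

/-- `f` is a polynomial in `q = v²` -/
def isPolyInQ (f : RR) : Prop := ∀ g ∈ f.coeff.support, g.1 = 0 ∧ 0 ≤ g.2 ∧ 2 ∣ g.2

end
theorem tgen_apply (x : ℤ) : tgen x = if x = 1 then -1 else if x = -1 then 1 else x := by
  unfold tgen; rw [Equiv.swap_apply_def]

theorem sgen_apply (k : ℕ) (hk : 1 ≤ k) (x : ℤ) : sgen k x =
    if x = (k : ℤ) then (k : ℤ) + 1 else if x = (k : ℤ) + 1 then (k : ℤ)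
    else if x = -(k : ℤ) then -((k : ℤ) + 1)
    else if x = -((k : ℤ) + 1) then -(k : ℤ) else x := by
  unfold sgen; rw [Equiv.Perm.mul_apply, Equiv.swap_apply_def, Equiv.swap_apply_def]
  split_ifs <;> omega

theorem W_one (n : ℕ) : (1 : P) ∈ Wset n := by simp [Wset]

theorem W_mul {n : ℕ} {a b : P} (ha : a ∈ Wset n) (hb : b ∈ Wset n) : a * b ∈ Wset n := by
  refine ⟨fun i => ?_, fun i hi => ?_⟩
  · rw [Equiv.Perm.mul_apply, hb.1, ha.1]; rfl
  · rw [Equiv.Perm.mul_apply, hb.2 i hi, ha.2 i hi]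

theorem W_mono {m n : ℕ} (h : m ≤ n) {a : P} (ha : a ∈ Wset m) : a ∈ Wset n :=
  ⟨ha.1, fun i hi => ha.2 i (by omega)⟩

theorem W_t {n : ℕ} (hn : 1 ≤ n) : tgen ∈ Wset n := by
  refine ⟨fun i => ?_, fun i hi => ?_⟩
  · simp only [tgen_apply]; split_ifs <;> omega
  · rw [lt_abs] at hi
    simp only [tgen_apply]; split_ifs <;> omega

theorem W_s {n k : ℕ} (hk : 1 ≤ k) (hn : k + 1 ≤ n) : sgen k ∈ Wset n := by
  refine ⟨fun i => ?_, fun i hi => ?_⟩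
  · simp only [sgen_apply k hk]; split_ifs <;> omega
  · rw [lt_abs] at hi
    simp only [sgen_apply k hk]; split_ifs <;> omega

theorem W_bd {n : ℕ} {w : P} (hw : w ∈ Wset n) (x : ℤ) (hx : |x| ≤ n) : |w x| ≤ n := by
  by_contra h
  push Not at h
  have := w.injective (hw.2 _ h)
  rw [this] at h; omega

theorem W_zero {n : ℕ} {w : P} (hw : w ∈ Wset n) : w 0 = 0 := by
  have := hw.1 0; simp at this; omega

theorem W_ne {n : ℕ} {w : P} (hw : w ∈ Wset n) {x : ℤ} (hx : x ≠ 0) : w x ≠ 0 := by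
  intro h; apply hx; apply w.injective; rw [h, W_zero hw]

theorem W_inv {n : ℕ} {w : P} (hw : w ∈ Wset n) : w⁻¹ ∈ Wset n := by
  refine ⟨fun i => ?_, fun i hi => ?_⟩
  · rw [Equiv.Perm.inv_eq_iff_eq, hw.1]; simp
  · rw [Equiv.Perm.inv_eq_iff_eq, hw.2 i hi]

theorem S_cases {n : ℕ} {g : P} (hg : g ∈ Sset n) :
    g = tgen ∨ ∃ k : ℕ, 1 ≤ k ∧ k + 1 ≤ n ∧ g = sgen k := by
  rcases hg with h | ⟨k, hk, h⟩
  · exact Or.inl h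
  · rw [Set.mem_Icc] at hk
    exact Or.inr ⟨k, hk.1, by omega, h.symm⟩

theorem S_t (n : ℕ) : tgen ∈ Sset n := Set.mem_insert _ _

theorem S_s {n k : ℕ} (hk : 1 ≤ k) (hn : k + 1 ≤ n) : sgen k ∈ Sset n :=
  Set.mem_insert_of_mem _ ⟨k, ⟨hk, by omega⟩, rfl⟩

theorem S_W {n : ℕ} (hn : 1 ≤ n) {g : P} (hg : g ∈ Sset n) : g ∈ Wset n := by
  rcases S_cases hg with rfl | ⟨k, h1, h2, rfl⟩
  · exact W_t hn
  · exact W_s h1 h2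

theorem t_sq : tgen * tgen = 1 := by unfold tgen; simp

theorem s_sq (k : ℕ) (hk : 1 ≤ k) : sgen k * sgen k = 1 := by
  ext x
  rw [Equiv.Perm.mul_apply, sgen_apply k hk, sgen_apply k hk, Equiv.Perm.one_apply]
  split_ifs <;> omega

/-- positive roots -/
noncomputable def Rts (n : ℕ) : Finset (ℤ × ℤ) :=
  (Finset.Icc (-(n : ℤ)) n ×ˢ Finset.Icc 1 (n : ℤ)).filter
    (fun p => -p.2 ≤ p.1 ∧ p.1 < p.2 ∧ p.1 ≠ 0)

noncomputable def InvS (n : ℕ) (w : P) : Finset (ℤ × ℤ) := (Rts n).filter (fun p => w p.2 < w p.1)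

noncomputable def Nst (n : ℕ) (w : P) : ℕ := (InvS n w).card

theorem mem_InvS {n : ℕ} {w : P} {p : ℤ × ℤ} : p ∈ InvS n w ↔
    (1 ≤ p.2 ∧ p.2 ≤ n ∧ -p.2 ≤ p.1 ∧ p.1 < p.2 ∧ p.1 ≠ 0) ∧ w p.2 < w p.1 := by
  simp only [InvS, Rts, Finset.mem_filter, Finset.mem_product, Finset.mem_Icc]
  constructor
  · rintro ⟨⟨_, _⟩, _⟩; refine ⟨⟨?_, ?_, ?_, ?_, ?_⟩, ?_⟩ <;> tauto
  · rintro ⟨⟨_, _, _, _, _⟩, _⟩; refine ⟨⟨⟨⟨?_, ?_⟩, ?_, ?_⟩, ?_, ?_, ?_⟩, ?_⟩ <;> first | assumption | omega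

noncomputable def phi (g : P) (p : ℤ × ℤ) : ℤ × ℤ :=
  if |g p.1| ≤ g p.2 then (g p.1, g p.2) else (-g p.2, -g p.1)

theorem N_step (n : ℕ) (w g : P) (a b : ℤ) (hw : w ∈ Wset n) (hg : g ∈ Wset n)
    (hinv : ∀ x, g (g x) = x) (hab : g a = b) (hba : g b = a)
    (hb : 1 ≤ b) (hbn : b ≤ n) (ha : -b ≤ a) (hlt : a < b) (ha0 : a ≠ 0)
    (hR : ∀ i j : ℤ, i < j → i ≠ 0 → j ≠ 0 → -j ≤ i → (i, j) ≠ (a, b) → g i < g j)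
    (hasc : w a < w b) : Nst n (w * g) = Nst n w + 1 := by
  have hmem : (a, b) ∈ InvS n (w * g) := by
    rw [mem_InvS]
    refine ⟨⟨hb, hbn, ha, hlt, ha0⟩, ?_⟩
    simp only [Equiv.Perm.mul_apply, hab, hba]; exact hasc
  have key : ∀ i j : ℤ, 1 ≤ j → j ≤ n → -j ≤ i → i < j → i ≠ 0 → (i, j) ≠ (a, b) →
      (let q := phi g (i, j); (1 ≤ q.2 ∧ q.2 ≤ n ∧ -q.2 ≤ q.1 ∧ q.1 < q.2 ∧ q.1 ≠ 0) ∧ q ≠ (a, b) ∧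
        phi g q = (i, j)) := by
    intro i j h1 h2 h3 h4 h5 h6
    have hlt' := hR i j h4 h5 (by omega) h3 h6
    have n1 := W_ne hg h5
    have n2 := W_ne hg (x := j) (by omega)
    have b1 := W_bd hg i (by rw [abs_le]; omega)
    have b2 := W_bd hg j (by rw [abs_le]; omega)
    rw [abs_le] at b1 b2
    have e1 := hinv i
    have e2 := hinv j
    have o1 := hg.1 (g i)
    have o2 := hg.1 (g j)
    have o3 := hg.1 a
    have o4 := hg.1 b
    by_cases hc : |g i| ≤ g j
    · have : phi g (i, j) = (g i, g j) := by simp [phi, hc]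
      rw [this]
      rw [abs_le] at hc
      refine ⟨⟨by omega, by omega, by omega, hlt', n1⟩, ?_, ?_⟩
      · intro h
        rw [Prod.mk.injEq] at h
        rw [h.1, hab] at e1
        rw [h.2, hba] at e2
        omega
      · simp only [phi, e1, e2]
        rw [if_pos (by rw [abs_le]; omega)]
    · have : phi g (i, j) = (-g j, -g i) := by simp [phi, hc]
      rw [this]
      rw [abs_le] at hc
      refine ⟨⟨by omega, by omega, by omega, by omega, by omega⟩, ?_, ?_⟩
      · intro h
        rw [Prod.mk.injEq] at h
        rw [h.1, hab, e2] at o2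
        omega
      · simp only [phi, o1, o2, e1, e2]
        by_cases hij : i = -j
        · subst hij
          rw [if_pos (by rw [abs_le]; omega)]; simp
        · rw [if_neg (by rw [abs_le]; omega)]; simp
  have : Nst n w = ((InvS n (w * g)).erase (a, b)).card := by
    refine Finset.card_nbij' (phi g) (phi g) ?_ ?_ ?_ ?_
    · rintro ⟨i, j⟩ hp
      rw [Finset.mem_coe, mem_InvS] at hp
      obtain ⟨⟨h1, h2, h3, h4, h5⟩, h6⟩ := hp
      obtain ⟨k1, k2, k3⟩ := key i j h1 h2 h3 h4 h5 (by rintro h; rw [Prod.mk.injEq] at h; simp only [h.1, h.2] at h6; omega)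
      rw [Finset.mem_coe, Finset.mem_erase, mem_InvS]
      refine ⟨k2, k1, ?_⟩
      simp only [Equiv.Perm.mul_apply, phi]
      split_ifs
      · simp only [hinv]; exact h6
      · simp only [hg.1, hw.1, hinv]; simp only at h6; omega
    · rintro ⟨i, j⟩ hp
      rw [Finset.mem_coe, Finset.mem_erase, mem_InvS] at hp
      obtain ⟨h0, ⟨h1, h2, h3, h4, h5⟩, h6⟩ := hp
      obtain ⟨k1, k2, k3⟩ := key i j h1 h2 h3 h4 h5 h0
      rw [Finset.mem_coe, mem_InvS]
      refine ⟨k1, ?_⟩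
      simp only [Equiv.Perm.mul_apply] at h6
      simp only [phi]
      split_ifs
      · exact h6
      · simp only [hw.1]; omega
    · rintro ⟨i, j⟩ hp
      rw [Finset.mem_coe, mem_InvS] at hp
      obtain ⟨⟨h1, h2, h3, h4, h5⟩, h6⟩ := hp
      exact (key i j h1 h2 h3 h4 h5 (by rintro h; rw [Prod.mk.injEq] at h; simp only [h.1, h.2] at h6; omega)).2.2
    · rintro ⟨i, j⟩ hp
      rw [Finset.mem_coe, Finset.mem_erase, mem_InvS] at hp
      obtain ⟨h0, ⟨h1, h2, h3, h4, h5⟩, h6⟩ := hp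
      exact (key i j h1 h2 h3 h4 h5 h0).2.2
  rw [this, Finset.card_erase_add_one hmem, Nst]

theorem N_t (n : ℕ) (hn : 1 ≤ n) (w : P) (hw : w ∈ Wset n) (h : 0 < w 1) :
    Nst n (w * tgen) = Nst n w + 1 := by
  apply N_step n w tgen (-1) 1 hw (W_t hn)
  · intro x; rw [← Equiv.Perm.mul_apply, t_sq]; rfl
  · simp [tgen_apply]
  · simp [tgen_apply]
  · omega
  · omega
  · omega
  · omega
  · omega
  · intro i j h1 h2 h3 h4 h5
    rw [Ne, Prod.mk.injEq] at h5
    rw [tgen_apply, tgen_apply]; split_ifs <;> omega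
  · rw [hw.1]; omega

theorem N_s (n k : ℕ) (hk : 1 ≤ k) (hn : k + 1 ≤ n) (w : P) (hw : w ∈ Wset n)
    (h : w k < w (k + 1)) : Nst n (w * sgen k) = Nst n w + 1 := by
  apply N_step n w (sgen k) k (k+1) hw (W_s hk hn)
  · intro x; rw [← Equiv.Perm.mul_apply, s_sq k hk]; rfl
  · simp [sgen_apply k hk]
  · simp [sgen_apply k hk]
  · omega
  · omega
  · omega
  · omega
  · omega
  · intro i j h1 h2 h3 h4 h5
    rw [Ne, Prod.mk.injEq] at h5
    rw [sgen_apply k hk, sgen_apply k hk]; split_ifs <;> omega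
  · exact h

theorem N_t' (n : ℕ) (hn : 1 ≤ n) (w : P) (hw : w ∈ Wset n) (h : w 1 < 0) :
    Nst n w = Nst n (w * tgen) + 1 := by
  rw [← N_t n hn (w * tgen) (W_mul hw (W_t hn)), mul_assoc, t_sq, mul_one]
  rw [Equiv.Perm.mul_apply, tgen_apply, if_pos rfl, hw.1]; omega

theorem N_s' (n k : ℕ) (hk : 1 ≤ k) (hn : k + 1 ≤ n) (w : P) (hw : w ∈ Wset n)
    (h : w (k + 1) < w k) : Nst n w = Nst n (w * sgen k) + 1 := by
  rw [← N_s n k hk hn (w * sgen k) (W_mul hw (W_s hk hn)), mul_assoc, s_sq k hk, mul_one]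
  simpa [Equiv.Perm.mul_apply, sgen_apply k hk] using h

/-- negative set -/
noncomputable def Ang (n : ℕ) (w : P) : Finset ℤ := (Finset.Icc 1 (n : ℤ)).filter (fun a => w⁻¹ a < 0)

theorem mem_Ang {n : ℕ} {w : P} {a : ℤ} : a ∈ Ang n w ↔ (1 ≤ a ∧ a ≤ n) ∧ w⁻¹ a < 0 := by
  simp [Ang]

theorem A_s (n k : ℕ) (hk : 1 ≤ k) (w : P) : Ang n (w * sgen k) = Ang n w := by
  ext a
  have : (sgen k)⁻¹ = sgen k := inv_eq_of_mul_eq_one_left (s_sq k hk)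
  rw [mem_Ang, mem_Ang, mul_inv_rev, this, Equiv.Perm.mul_apply, sgen_apply k hk]
  split_ifs <;> omega

theorem A_t (n : ℕ) (hn : 1 ≤ n) (w : P) (hw : w ∈ Wset n) (h : 0 < w 1) :
    (Ang n (w * tgen)).card = (Ang n w).card + 1 := by
  have h1 : w 1 ∉ Ang n w := by simp [mem_Ang]
  have hb := W_bd hw 1 (by simpa using hn)
  rw [abs_le] at hb
  rw [← Finset.card_insert_of_notMem h1]
  congr 1
  ext a
  have : (tgen)⁻¹ = tgen := inv_eq_of_mul_eq_one_left t_sq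
  rw [Finset.mem_insert, mem_Ang, mem_Ang, mul_inv_rev, this, Equiv.Perm.mul_apply, tgen_apply]
  have e : a = w 1 ↔ w⁻¹ a = 1 := by rw [Equiv.Perm.inv_eq_iff_eq]
  have e2 : w⁻¹ a = -1 ↔ a = - w 1 := by rw [Equiv.Perm.inv_eq_iff_eq, hw.1]
  split_ifs with h3 h4
  · have := e.2 h3; omega
  · have := e2.1 h4; omega
  · rw [e]; omega

/-- increasing on `1..n` -/
def Incr (n : ℕ) (w : P) : Prop := ∀ k : ℕ, 1 ≤ k → k + 1 ≤ n → w k < w (k + 1)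

theorem Incr_lt {n : ℕ} {w : P} (h : Incr n w) (i j : ℤ) (hi : 1 ≤ i) (hij : i < j) (hj : j ≤ n) :
    w i < w j := by
  obtain ⟨d, rfl⟩ : ∃ d : ℕ, j = i + 1 + d := ⟨(j - i - 1).toNat, by omega⟩
  clear hij
  obtain ⟨m, rfl⟩ : ∃ m : ℕ, i = m := ⟨i.toNat, by omega⟩
  induction d with
  | zero => simpa using h m (by omega) (by omega)
  | succ d ih =>
    have h1 := ih (by omega)
    have h2 := h (m + 1 + d) (by omega) (by omega)
    push_cast at h2 ⊢
    rw [← add_assoc]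
    omega

theorem Incr_unique {n : ℕ} {w v : P} (hw : w ∈ Wset n) (hv : v ∈ Wset n)
    (iw : Incr n w) (iv : Incr n v) (hA : Ang n w = Ang n v) : w = v := by
  have img : ∀ u : P, u ∈ Wset n → ∀ a : ℤ, (∃ i, (1 ≤ i ∧ i ≤ (n : ℤ)) ∧ u i = a) ↔
      (-(n : ℤ) ≤ a ∧ a ≤ n ∧ (0 < a ∧ a ∉ Ang n u ∨ a < 0 ∧ -a ∈ Ang n u)) := by
    intro u hu a
    have hi := W_inv hu
    have o := hi.1 a
    rw [mem_Ang, mem_Ang, o]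
    constructor
    · rintro ⟨i, ⟨h1, h2⟩, rfl⟩
      have hb := W_bd hu i (by rw [abs_le]; omega)
      have hne := W_ne hu (x := i) (by omega)
      rw [abs_le] at hb
      have : u⁻¹ (u i) = i := by simp
      rw [this]
      omega
    · rintro ⟨h1, h2, h3⟩
      have hb := W_bd hi a (by rw [abs_le]; omega)
      have hne := W_ne hi (x := a) (by omega)
      rw [abs_le] at hb
      exact ⟨u⁻¹ a, by omega, by simp⟩
  let f : P → Set.Icc (1 : ℤ) n → ℤ := fun u x => u x.1
  have hf : ∀ u, Incr n u → StrictMono (f u) := by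
    intro u hu x y hxy
    exact Incr_lt hu _ _ x.2.1 hxy y.2.2
  have hr : Set.range (f w) = Set.range (f v) := by
    ext a
    have h1 := img w hw a
    have h2 := img v hv a
    rw [hA, ← h2] at h1
    simpa [f] using h1
  have heq : f w = f v := ((hf w iw).range_inj (hf v iv)).1 hr
  have pos : ∀ x : ℤ, 1 ≤ x → x ≤ n → w x = v x := fun x h1 h2 => congrFun heq ⟨x, h1, h2⟩
  ext x
  by_cases hx : (n : ℤ) < |x|
  · rw [hw.2 x hx, hv.2 x hx]
  · rw [not_lt, abs_le] at hx
    rcases lt_trichotomy x 0 with h | h | h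
    · have := pos (-x) (by omega) (by omega)
      rw [hw.1, hv.1] at this; omega
    · rw [h, W_zero hw, W_zero hv]
    · exact pos x (by omega) (by omega)

theorem exists_word (n : ℕ) (hn : 1 ≤ n) : ∀ (m : ℕ) (w : P), w ∈ Wset n → Nst n w = m →
    ∃ l : List P, (∀ g ∈ l, g ∈ Sset n) ∧ l.prod = w ∧ l.length = m := by
  intro m
  induction m with
  | zero =>
    intro w hw h0
    refine ⟨[], by simp, ?_, rfl⟩
    rw [List.prod_nil]
    symm
    have i1 : Incr n w := by
      intro k h1 h2
      by_contra h
      have hne : w (k + 1) ≠ w k := fun e => by have := w.injective e; omega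
      have := N_s' n k h1 h2 w hw (by omega)
      omega
    have p1 : 0 < w 1 := by
      by_contra h
      have hne := W_ne hw (x := 1) (by omega)
      have := N_t' n hn w hw (by omega)
      omega
    refine Incr_unique hw (W_one n) i1 (fun k _ _ => by simp) ?_
    ext a
    rw [mem_Ang, mem_Ang]
    simp only [inv_one, Equiv.Perm.one_apply]
    constructor
    · rintro ⟨⟨h1, h2⟩, h3⟩
      exfalso
      have hb := W_bd (W_inv hw) a (by rw [abs_le]; omega)
      rw [abs_le] at hb
      have h4 : w (-(w⁻¹ a)) = -a := by rw [hw.1]; simp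
      by_cases h5 : w⁻¹ a = -1
      · rw [h5] at h4; simp at h4; omega
      · have := Incr_lt i1 1 (-(w⁻¹ a)) (by omega) (by omega) (by omega)
        omega
    · omega
  | succ m ih =>
    intro w hw hN
    by_cases hex : ∃ g ∈ Sset n, g * g = 1 ∧ Nst n w = Nst n (w * g) + 1
    · obtain ⟨g, hg, hsq, h⟩ := hex
      obtain ⟨l, h1, h2, h3⟩ := ih (w * g) (W_mul hw (S_W hn hg)) (by omega)
      refine ⟨l ++ [g], ?_, ?_, ?_⟩
      · intro x hx
        rw [List.mem_append, List.mem_singleton] at hx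
        rcases hx with hx | rfl
        · exact h1 x hx
        · exact hg
      · rw [List.prod_append, h2, List.prod_singleton, mul_assoc, hsq, mul_one]
      · simp [h3]
    · exfalso
      push Not at hex
      have i1 : Incr n w := by
        intro k h1 h2
        by_contra h
        have hne : w (k + 1) ≠ w k := fun e => by have := w.injective e; omega
        exact hex _ (S_s h1 h2) (s_sq k h1) (N_s' n k h1 h2 w hw (by omega))
      have p1 : 0 < w 1 := by
        by_contra h
        have hne := W_ne hw (x := 1) (by omega)
        exact hex _ (S_t n) t_sq (N_t' n hn w hw (by omega))
      have pp : ∀ j : ℤ, 1 ≤ j → j ≤ n → 0 < w j := by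
        intro j h1 h2
        by_cases h : j = 1
        · rw [h]; exact p1
        · have := Incr_lt i1 1 j (by omega) (by omega) h2
          omega
      have : InvS n w = ∅ := by
        rw [Finset.eq_empty_iff_forall_notMem]
        rintro ⟨i, j⟩ hp
        rw [mem_InvS] at hp
        obtain ⟨⟨h1, h2, h3, h4, h5⟩, h6⟩ := hp
        simp only at h1 h2 h3 h4 h5 h6
        rcases lt_or_gt_of_ne h5 with h | h
        · have a1 := pp (-i) (by omega) (by omega)
          have a2 := pp j (by omega) (by omega)
          rw [hw.1] at a1
          omega
        · have := Incr_lt i1 i j (by omega) (by omega) (by omega)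
          omega
      rw [Nst, this] at hN
      simp at hN

theorem prod_W {n : ℕ} {l : List P} (h : ∀ g ∈ l, g ∈ Wset n) : l.prod ∈ Wset n := by
  induction l with
  | nil => exact W_one n
  | cons a l ih =>
    rw [List.prod_cons]
    exact W_mul (h a (by simp)) (ih fun g hg => h g (by simp [hg]))

theorem N_one (n : ℕ) : Nst n 1 = 0 := by
  rw [Nst, Finset.card_eq_zero, Finset.eq_empty_iff_forall_notMem]
  rintro ⟨i, j⟩ hp
  rw [mem_InvS] at hp
  simp only [Equiv.Perm.one_apply] at hp
  omega

theorem t_ne_s {k : ℕ} (hk : 1 ≤ k) : sgen k ≠ tgen := by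
  intro h
  have := congrArg (fun g : P => g 1) h
  simp only [sgen_apply k hk, tgen_apply] at this
  split_ifs at this <;> omega

theorem word_bound (n : ℕ) (hn : 1 ≤ n) (l : List P) : (∀ g ∈ l, g ∈ Sset n) →
    Nst n l.prod ≤ l.length ∧ (Nst n l.prod = l.length → tcount l = (Ang n l.prod).card) := by
  induction l using List.reverseRecOn with
  | nil =>
    intro _
    rw [List.prod_nil, N_one]
    refine ⟨le_rfl, fun _ => ?_⟩
    symm
    simp only [tcount, List.map_nil, List.sum_nil]
    rw [Finset.card_eq_zero, Finset.eq_empty_iff_forall_notMem]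
    intro a ha
    rw [mem_Ang] at ha
    simp at ha
    omega
  | append_singleton l g ih =>
    intro h
    have hl : ∀ x ∈ l, x ∈ Sset n := fun x hx => h x (by simp [hx])
    obtain ⟨i1, i2⟩ := ih hl
    have hg : g ∈ Sset n := h g (by simp)
    have hw : l.prod ∈ Wset n := prod_W fun x hx => S_W hn (hl x hx)
    have htc : tcount (l ++ [g]) = tcount l + if g = tgen then 1 else 0 := by
      simp [tcount]
    rw [List.prod_append, List.prod_singleton, List.length_append, List.length_singleton, htc]
    rcases S_cases hg with rfl | ⟨k, h1, h2, rfl⟩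
    · rw [if_pos rfl]
      have hne := W_ne hw (x := 1) (by omega)
      rcases lt_or_gt_of_ne hne with hh | hh
      · have := N_t' n hn _ hw hh
        exact ⟨by omega, fun _ => by omega⟩
      · have := N_t n hn _ hw hh
        have h3 := A_t n hn _ hw hh
        exact ⟨by omega, fun e => by rw [h3, i2 (by omega)]⟩
    · rw [if_neg (t_ne_s h1), A_s n k h1]
      have hne : l.prod ((k : ℤ) + 1) ≠ l.prod k := fun e => by
        have := l.prod.injective e; omega
      rcases lt_or_gt_of_ne hne with hh | hh
      · have := N_s' n k h1 h2 _ hw hh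
        exact ⟨by omega, fun _ => by omega⟩
      · have := N_s n k h1 h2 _ hw hh
        exact ⟨by omega, fun e => by rw [i2 (by omega)]; rfl⟩

theorem len_eq (n : ℕ) (hn : 1 ≤ n) (w : P) (hw : w ∈ Wset n) : len n w = Nst n w := by
  unfold len
  obtain ⟨l, h1, h2, h3⟩ := exists_word n hn _ w hw rfl
  apply le_antisymm
  · exact Nat.sInf_le ⟨l, h1, h2, h3⟩
  · refine le_csInf ⟨Nst n w, l, h1, h2, h3⟩ ?_
    rintro k ⟨l', a1, a2, rfl⟩
    rw [← a2]
    exact (word_bound n hn l' a1).1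

theorem tlen_eq (n : ℕ) (hn : 1 ≤ n) (w : P) (hw : w ∈ Wset n) : tlen n w = (Ang n w).card := by
  have : {k | ∃ l : List P, (∀ g ∈ l, g ∈ Sset n) ∧ l.prod = w ∧
    l.length = len n w ∧ tcount l = k} = {(Ang n w).card} := by
    rw [len_eq n hn w hw]
    ext k
    simp only [Set.mem_setOf_eq, Set.mem_singleton_iff]
    constructor
    · rintro ⟨l, h1, h2, h3, rfl⟩
      rw [(word_bound n hn l h1).2 (by rw [h2, h3]), h2]
    · rintro rfl
      obtain ⟨l, h1, h2, h3⟩ := exists_word n hn _ w hw rfl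
      exact ⟨l, h1, h2, h3, by rw [(word_bound n hn l h1).2 (by rw [h2, h3]), h2]⟩
  rw [tlen, this, csInf_singleton]

theorem s_Sym {n k : ℕ} (hk : 1 ≤ k) (hn : k + 1 ≤ n) : sgen k ∈ SymN n :=
  Subgroup.subset_closure ⟨k, ⟨hk, by omega⟩, rfl⟩

theorem Sym_prop {n : ℕ} {u : P} (hu : u ∈ SymN n) :
    u ∈ Wset n ∧ ∀ w, Ang n (w * u) = Ang n w := by
  induction hu using Subgroup.closure_induction with
  | mem x hx =>
    obtain ⟨k, hk, rfl⟩ := hx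
    rw [Set.mem_Icc] at hk
    exact ⟨W_s hk.1 (by omega), A_s n k hk.1⟩
  | one => exact ⟨W_one n, by simp⟩
  | mul x y _ _ hx hy =>
    exact ⟨W_mul hx.1 hy.1, fun w => by rw [← mul_assoc, hy.2, hx.2]⟩
  | inv x _ hx =>
    exact ⟨W_inv hx.1, fun w => by rw [← hx.2 (w * x⁻¹), inv_mul_cancel_right]⟩

theorem exists_incr (n : ℕ) (m : ℕ) : ∀ (w : P), w ∈ Wset n → Nst n w = m →
    ∃ u ∈ SymN n, Incr n (w * u) ∧ Nst n (w * u) ≤ Nst n w := by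
  induction m with
  | zero =>
    intro w hw h0
    refine ⟨1, one_mem _, ?_, by simp⟩
    rw [mul_one]
    intro k h1 h2
    by_contra h
    have hne : w (k + 1) ≠ w k := fun e => by have := w.injective e; omega
    have := N_s' n k h1 h2 w hw (by omega)
    omega
  | succ m ih =>
    intro w hw hm
    by_cases hi : Incr n w
    · exact ⟨1, one_mem _, by simpa using hi, by simp⟩
    · unfold Incr at hi
      push Not at hi
      obtain ⟨k, h1, h2, h⟩ := hi
      have hne : w (k + 1) ≠ w k := fun e => by have := w.injective e; omega
      have h3 := N_s' n k h1 h2 w hw (by omega)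
      obtain ⟨u, a1, a2, a3⟩ := ih (w * sgen k) (W_mul hw (W_s h1 h2)) (by omega)
      rw [mul_assoc] at a2 a3
      exact ⟨_, mul_mem (s_Sym h1 h2) a1, a2, by omega⟩

theorem X_iff (n : ℕ) (hn : 1 ≤ n) (w : P) : w ∈ Xset n ↔ w ∈ Wset n ∧ Incr n w := by
  constructor
  · rintro ⟨hw, h⟩
    refine ⟨hw, fun k h1 h2 => ?_⟩
    by_contra hlt
    have hne : w (k + 1) ≠ w k := fun e => by have := w.injective e; omega
    have h3 := N_s' n k h1 h2 w hw (by omega)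
    have h4 := h _ (s_Sym h1 h2)
    rw [len_eq n hn _ hw, len_eq n hn _ (W_mul hw (W_s h1 h2))] at h4
    omega
  · rintro ⟨hw, hi⟩
    refine ⟨hw, fun u hu => ?_⟩
    have hwu := W_mul hw (Sym_prop hu).1
    rw [len_eq n hn _ hw, len_eq n hn _ hwu]
    obtain ⟨v, a1, a2, a3⟩ := exists_incr n _ _ hwu rfl
    have : w = w * u * v := by
      refine Incr_unique hw (W_mul hwu (Sym_prop a1).1) hi a2 ?_
      rw [(Sym_prop a1).2, (Sym_prop hu).2]
    rw [← this] at a3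
    exact a3

theorem rgen_apply (i : ℕ) : ∀ x : ℤ, rgen (i + 1) x =
    if x = 1 then -((i : ℤ) + 1) else if x = -1 then (i : ℤ) + 1
    else if 2 ≤ x ∧ x ≤ (i : ℤ) + 1 then x - 1
    else if x ≤ -2 ∧ -((i : ℤ) + 1) ≤ x then x + 1 else x := by
  induction i with
  | zero =>
    intro x
    rw [show rgen (0 + 1) = tgen from rfl, tgen_apply]
    split_ifs <;> omega
  | succ i ih =>
    intro x
    rw [show rgen (i + 1 + 1) = sgen (i + 1) * rgen (i + 1) from rfl, Equiv.Perm.mul_apply, ih,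
      sgen_apply _ (by omega)]
    push_cast
    split_ifs <;> omega

theorem rgen_W (i : ℕ) : rgen (i + 1) ∈ Wset (i + 1) := by
  induction i with
  | zero => exact W_t le_rfl
  | succ i ih =>
    exact W_mul (W_s (by omega) (by omega)) (W_mono (by omega) ih)

theorem N_rgen (n i : ℕ) : i + 1 ≤ n → ∀ w, w ∈ Wset n → 0 < w (i + 1) →
    (∀ k : ℤ, 1 ≤ k → k ≤ i → w k < w (i + 1)) → Nst n (w * rgen (i + 1)) = Nst n w + (i + 1) := by
  induction i with
  | zero =>
    intro hi w hw h0 _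
    exact N_t n hi w hw (by simpa using h0)
  | succ i ih =>
    intro hi w hw h0 hk
    push_cast at h0 hk
    have h1 := N_s n (i + 1) (by omega) hi w hw (by
      push_cast; exact hk _ (by omega) (by omega))
    have e : ∀ x : ℤ, x ≤ i → 1 ≤ x → (w * sgen (i + 1)) x = w x := by
      intro x hx hx'
      rw [Equiv.Perm.mul_apply, sgen_apply _ (by omega)]
      push_cast
      congr 1
      split_ifs <;> omega
    have e2 : (w * sgen (i + 1)) (i + 1) = w (i + 1 + 1) := by
      rw [Equiv.Perm.mul_apply, sgen_apply _ (by omega)]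
      push_cast
      congr 1
      split_ifs <;> omega
    have := ih (by omega) (w * sgen (i + 1)) (W_mul hw (W_s (by omega) (by omega)))
      (by rw [e2]; exact h0)
      (by intro k a b; rw [e k b a, e2]; exact hk k a (by omega))
    rw [show rgen (i + 1 + 1) = sgen (i + 1) * rgen (i + 1) from rfl, ← mul_assoc, this, h1]
    omega

theorem prod_props (n : ℕ) (L : List ℕ) : ∀ m : ℕ, m ≤ n → L.Pairwise (· < ·) →
    (∀ i ∈ L, 1 ≤ i ∧ i ≤ m) →
    (L.map rgen).prod ∈ Wset m ∧ Incr n (L.map rgen).prod ∧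
    Nst n (L.map rgen).prod = L.sum ∧
    ∀ a : ℕ, 1 ≤ a → a ≤ n → (((L.map rgen).prod)⁻¹ (a : ℤ) < 0 ↔ a ∈ L) := by
  induction L using List.reverseRecOn with
  | nil =>
    intro m _ _ _
    refine ⟨W_one m, fun k _ _ => by simp, by simp [N_one], fun a h1 h2 => ?_⟩
    simp
  | append_singleton L i ih =>
    intro m hm hp hb
    rw [List.pairwise_append] at hp
    obtain ⟨hp1, -, hp2⟩ := hp
    obtain ⟨i, rfl⟩ : ∃ j, i = j + 1 := ⟨i - 1, by have := hb i (by simp); omega⟩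
    have him := (hb (i + 1) (by simp)).2
    obtain ⟨a1, a2, a3, a4⟩ := ih i (by omega) hp1 (fun x hx => by
      have := hb x (by simp [hx])
      have := hp2 x hx (i + 1) (by simp)
      omega)
    rw [List.map_append, List.prod_append, List.map_singleton, List.prod_singleton,
      List.sum_append, List.sum_singleton]
    set w := (L.map rgen).prod with hwdef
    have fx : ∀ x : ℤ, (i : ℤ) < x → w x = x := fun x hx => a1.2 x (by rw [lt_abs]; omega)
    have bd : ∀ x : ℤ, 1 ≤ x → x ≤ i → -(i : ℤ) ≤ w x ∧ w x ≤ i := fun x h1 h2 => by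
      have := W_bd a1 x (by rw [abs_le]; omega)
      rwa [abs_le] at this
    refine ⟨W_mul (W_mono (by omega) a1) (W_mono him (rgen_W i)), ?_, ?_, ?_⟩
    · intro k h1 h2
      have hf := fx (i + 1) (by omega)
      rw [Equiv.Perm.mul_apply, Equiv.Perm.mul_apply, rgen_apply, rgen_apply]
      have ho := a1.1 (i + 1)
      by_cases c1 : k = 1
      · subst c1
        simp only [Nat.cast_one, if_true]
        rw [ho, hf]
        by_cases c2 : i = 0
        · rw [if_neg (by omega), if_neg (by omega), if_neg (by omega), if_neg (by omega), fx _ (by omega)]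
          omega
        · rw [if_neg (by omega), if_neg (by omega), if_pos (by omega)]
          have := bd 1 (by omega) (by omega)
          norm_num
          omega
      · rw [if_neg (by omega), if_neg (by omega)]
        rw [if_neg (c := (k : ℤ) + 1 = 1) (by omega), if_neg (c := (k : ℤ) + 1 = -1) (by omega)]
        by_cases c2 : k + 1 ≤ i + 1
        · rw [if_pos (by omega), if_pos (by omega)]
          exact Incr_lt a2 _ _ (by omega) (by omega) (by omega)
        · rw [if_neg (c := 2 ≤ (k : ℤ) + 1 ∧ (k : ℤ) + 1 ≤ i + 1) (by omega),
            if_neg (c := (k : ℤ) + 1 ≤ -2 ∧ -((i : ℤ) + 1) ≤ (k : ℤ) + 1) (by omega),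
            fx ((k : ℤ) + 1) (by omega)]
          by_cases c3 : k = i + 1
          · rw [if_pos (by omega)]
            have := bd ((k : ℤ) - 1) (by omega) (by omega)
            omega
          · rw [if_neg (by omega), if_neg (by omega), fx _ (by omega)]
            omega
    · have hf := fx (i + 1) (by omega)
      rw [N_rgen n i (by omega) w (W_mono (by omega) a1) (by omega) (fun k h1 h2 => by
        have := bd k h1 h2
        omega), a3]
    · intro a h1 h2
      rw [mul_inv_rev, Equiv.Perm.mul_apply, List.mem_append, List.mem_singleton, ← a4 a h1 h2]
      have hinv := W_inv a1
      generalize hy : w⁻¹ (a : ℤ) = y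
      have hya : w y = a := by rw [← hy]; simp
      generalize hz : (rgen (i + 1))⁻¹ y = z
      have hzy : rgen (i + 1) z = y := by rw [← hz]; simp
      have k1 : y = i + 1 ↔ a = i + 1 := by
        constructor
        · rintro rfl
          rw [fx _ (by omega)] at hya
          omega
        · rintro rfl
          rw [← hy, hinv.2]
          · push_cast; rfl
          · rw [lt_abs]; omega
      have k2 : y ≠ -(i + 1) := by
        rintro rfl
        rw [a1.1, fx _ (by omega)] at hya
        omega
      rw [rgen_apply] at hzy
      split_ifs at hzy <;> omega

theorem chain_pw (L : List ℕ) : List.Chain' (· < ·) L ↔ L.Pairwise (· < ·) :=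
  List.isChain_iff_pairwise

theorem Ang_prod (n : ℕ) (L : List ℕ) (hp : L.Pairwise (· < ·)) (hb : ∀ i ∈ L, 1 ≤ i ∧ i ≤ n) :
    Ang n (L.map rgen).prod = (L.toFinset).image (fun i : ℕ => (i : ℤ)) := by
  obtain ⟨a1, a2, a3, a4⟩ := prod_props n L n le_rfl hp hb
  ext a
  rw [mem_Ang, Finset.mem_image]
  constructor
  · rintro ⟨⟨h1, h2⟩, h3⟩
    obtain ⟨b, rfl⟩ : ∃ b : ℕ, a = b := ⟨a.toNat, by omega⟩
    exact ⟨b, by rw [List.mem_toFinset]; exact (a4 b (by omega) (by omega)).1 h3, rfl⟩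
  · rintro ⟨b, hbL, rfl⟩
    rw [List.mem_toFinset] at hbL
    have := hb b hbL
    exact ⟨by omega, (a4 b this.1 this.2).2 hbL⟩

theorem card_Ang_prod (n : ℕ) (L : List ℕ) (hp : L.Pairwise (· < ·))
    (hb : ∀ i ∈ L, 1 ≤ i ∧ i ≤ n) : (Ang n (L.map rgen).prod).card = L.length := by
  rw [Ang_prod n L hp hb, Finset.card_image_of_injective _ Nat.cast_injective,
    List.toFinset_card_of_nodup (hp.imp (fun h => ne_of_lt h))]

theorem exists_L (n : ℕ) (S : Finset ℤ) (hS : S ⊆ Finset.Icc 1 (n : ℤ)) :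
    ∃ L : List ℕ, L.Pairwise (· < ·) ∧ (∀ i ∈ L, 1 ≤ i ∧ i ≤ n) ∧
      Ang n (L.map rgen).prod = S := by
  set T : Finset ℕ := (Finset.Icc 1 n).filter (fun i : ℕ => (i : ℤ) ∈ S) with hT
  have hp : (T.sort (· ≤ ·)).Pairwise (· < ·) := Finset.sortedLT_sort T |>.pairwise
  have hb : ∀ i ∈ T.sort (· ≤ ·), 1 ≤ i ∧ i ≤ n := by
    intro i hi
    rw [Finset.mem_sort, hT, Finset.mem_filter, Finset.mem_Icc] at hi
    exact hi.1
  refine ⟨_, hp, hb, ?_⟩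
  rw [Ang_prod n _ hp hb, Finset.sort_toFinset]
  ext a
  rw [Finset.mem_image]
  constructor
  · rintro ⟨b, h, rfl⟩
    rw [hT, Finset.mem_filter] at h
    exact h.2
  · intro ha
    have := Finset.mem_Icc.1 (hS ha)
    refine ⟨a.toNat, ?_, by omega⟩
    rw [hT, Finset.mem_filter, Finset.mem_Icc, show ((a.toNat : ℕ) : ℤ) = a by omega]
    exact ⟨by omega, ha⟩

theorem prod_mem_Xl (n : ℕ) (hn : 1 ≤ n) (L : List ℕ) (hp : L.Pairwise (· < ·))
    (hb : ∀ i ∈ L, 1 ≤ i ∧ i ≤ n) : (L.map rgen).prod ∈ Xl n L.length := by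
  obtain ⟨a1, a2, a3, a4⟩ := prod_props n L n le_rfl hp hb
  exact ⟨(X_iff n hn _).2 ⟨a1, a2⟩, by rw [tlen_eq n hn _ a1, card_Ang_prod n L hp hb]⟩

theorem Ang_sub (n : ℕ) (w : P) : Ang n w ⊆ Finset.Icc 1 (n : ℤ) := Finset.filter_subset _ _

/-- `X_n^{(l)}` consists exactly of the products
`r_{i_1} ⋯ r_{i_l}` with `1 ≤ i_1 < ⋯ < i_l ≤ n`; such a product has length
`i_1 + ⋯ + i_l`; and `|X_n^{(l)}| = C(n, l)`. -/
theorem Xl_description (n : ℕ) (hn : 1 ≤ n) (l : ℕ) (hl : l ≤ n) :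
    (Xl n l = {w : P | ∃ L : List ℕ, List.Chain' (· < ·) L ∧
        (∀ i ∈ L, 1 ≤ i ∧ i ≤ n) ∧ L.length = l ∧ w = (L.map rgen).prod}) ∧
    (∀ L : List ℕ, List.Chain' (· < ·) L → (∀ i ∈ L, 1 ≤ i ∧ i ≤ n) →
        L.length = l → len n (L.map rgen).prod = L.sum) ∧
    (Xl n l).ncard = n.choose l := by
  refine ⟨?_, ?_, ?_⟩
  · ext w
    constructor
    · rintro ⟨hX, ht⟩
      obtain ⟨hw, hi⟩ := (X_iff n hn w).1 hX
      obtain ⟨L, hp, hb, hA⟩ := exists_L n (Ang n w) (Ang_sub n w)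
      obtain ⟨a1, a2, -, -⟩ := prod_props n L n le_rfl hp hb
      refine ⟨L, (chain_pw L).2 hp, hb, ?_, Incr_unique hw a1 hi a2 hA.symm⟩
      rw [← card_Ang_prod n L hp hb, hA, ← tlen_eq n hn w hw, ht]
    · rintro ⟨L, hc, hb, rfl, rfl⟩
      exact prod_mem_Xl n hn L ((chain_pw L).1 hc) hb
  · intro L hc hb _
    obtain ⟨a1, a2, a3, -⟩ := prod_props n L n le_rfl ((chain_pw L).1 hc) hb
    rw [len_eq n hn _ a1, a3]
  · have hinj : Set.InjOn (Ang n) (Xl n l) := by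
      rintro w ⟨hw, -⟩ v ⟨hv, -⟩ h
      rw [X_iff n hn] at hw hv
      exact Incr_unique hw.1 hv.1 hw.2 hv.2 h
    have himg : Ang n '' (Xl n l) = ↑((Finset.Icc 1 (n : ℤ)).powersetCard l) := by
      ext S
      rw [Finset.mem_coe, Finset.mem_powersetCard]
      constructor
      · rintro ⟨w, ⟨hw, ht⟩, rfl⟩
        rw [X_iff n hn] at hw
        exact ⟨Ang_sub n w, by rw [← tlen_eq n hn w hw.1, ht]⟩
      · rintro ⟨hS, hc⟩
        obtain ⟨L, hp, hb, hA⟩ := exists_L n S hS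
        refine ⟨_, ?_, hA⟩
        have := prod_mem_Xl n hn L hp hb
        rwa [← card_Ang_prod n L hp hb, hA, hc] at this
    rw [← Set.ncard_image_of_injOn hinj, himg, Set.ncard_coe_finset, Finset.card_powersetCard]
    simp
end

section
/- Let 0 ≤ l ≤ n. The map Y_{l,n−l} → X_n^{(l)}, w ↦ w a_l, is a bijection. -/
open scoped Classical

/-! ### Helper lemmas -/

namespace YAl

theorem sgen_apply (i : ℕ) (hi : 1 ≤ i) (x : ℤ) : sgen i x =
    if x = i then (i : ℤ) + 1 else if x = (i : ℤ) + 1 then (i : ℤ)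
    else if x = -(i : ℤ) then -((i : ℤ) + 1) else if x = -((i : ℤ) + 1) then -(i : ℤ) else x := by
  simp only [sgen, Equiv.Perm.mul_apply, Equiv.swap_apply_def]
  split_ifs <;> omega

theorem tgen_apply (x : ℤ) : tgen x = if x = 1 then -1 else if x = -1 then 1 else x := by
  simp only [tgen, Equiv.swap_apply_def]

theorem sgen_sgen (i : ℕ) (hi : 1 ≤ i) (x : ℤ) : sgen i (sgen i x) = x := by
  simp only [sgen_apply i hi]
  split_ifs <;> omega

theorem tgen_tgen (x : ℤ) : tgen (tgen x) = x := by
  rw [tgen_apply x]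
  split_ifs with h1 h2
  · simp [tgen_apply, h1]
  · simp [tgen_apply, h2]
  · rw [tgen_apply, if_neg h1, if_neg h2]

theorem sgen_sq (i : ℕ) (hi : 1 ≤ i) : sgen i * sgen i = 1 := by
  ext x; simp [sgen_sgen i hi]

theorem tgen_sq : tgen * tgen = 1 := by
  ext x; simp [tgen_tgen]

theorem sgen_mem (n i : ℕ) (hi : 1 ≤ i) (hin : i + 1 ≤ n) : sgen i ∈ Wset n := by
  refine ⟨fun x => ?_, fun x hx => ?_⟩
  · simp only [sgen_apply i hi]
    split_ifs <;> omega
  · rw [lt_abs] at hx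
    simp only [sgen_apply i hi]
    split_ifs <;> omega

theorem tgen_mem (n : ℕ) (hn : 1 ≤ n) : tgen ∈ Wset n := by
  refine ⟨fun x => ?_, fun x hx => ?_⟩
  · simp only [tgen_apply]
    split_ifs <;> omega
  · rw [lt_abs] at hx
    simp only [tgen_apply]
    split_ifs <;> omega

theorem mul_mem {n : ℕ} {u v : P} (hu : u ∈ Wset n) (hv : v ∈ Wset n) : u * v ∈ Wset n := by
  refine ⟨fun x => ?_, fun x hx => ?_⟩
  · simp [hv.1, hu.1]
  · simp [hv.2 x hx, hu.2 x hx]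

theorem one_mem (n : ℕ) : (1 : P) ∈ Wset n := ⟨fun x => by simp, fun x _ => by simp⟩

theorem inv_mem {n : ℕ} {u : P} (hu : u ∈ Wset n) : u⁻¹ ∈ Wset n := by
  refine ⟨fun x => ?_, fun x hx => ?_⟩
  · rw [Equiv.Perm.inv_eq_iff_eq, hu.1]; simp
  · rw [Equiv.Perm.inv_eq_iff_eq, hu.2 x hx]

theorem zero_W {n : ℕ} {u : P} (hu : u ∈ Wset n) : u 0 = 0 := by
  have := hu.1 0
  simp at this
  omega

theorem ne_zero_W {n : ℕ} {u : P} (hu : u ∈ Wset n) {x : ℤ} (hx : x ≠ 0) : u x ≠ 0 := by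
  intro h
  apply hx
  apply u.injective
  rw [h, zero_W hu]

theorem bd_W {n : ℕ} {u : P} (hu : u ∈ Wset n) {x : ℤ} (h1 : -(n : ℤ) ≤ x) (h2 : x ≤ n) :
    -(n : ℤ) ≤ u x ∧ u x ≤ n := by
  by_contra h
  have h3 : (n : ℤ) < |u x| := by rw [lt_abs]; omega
  have h4 := hu.2 _ h3
  have h5 := u.injective h4
  omega

/-- inversions -/
noncomputable def IS (n : ℕ) (w : P) : Finset (ℤ × ℤ) :=
  (Finset.Icc (-(n : ℤ)) n ×ˢ Finset.Icc (-(n : ℤ)) n).filter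
    (fun p => p.1 ≠ 0 ∧ p.2 ≠ 0 ∧ p.1 < p.2 ∧ w p.2 < w p.1)

noncomputable def ng (n : ℕ) (w : P) : ℕ := ((Finset.Icc (1 : ℤ) n).filter (fun j => w j < 0)).card

noncomputable def M (n : ℕ) (w : P) : ℕ := (IS n w).card + ng n w

theorem mem_IS {n : ℕ} {w : P} {a b : ℤ} : (a, b) ∈ IS n w ↔
    ((-(n : ℤ) ≤ a ∧ a ≤ n) ∧ (-(n : ℤ) ≤ b ∧ b ≤ n)) ∧ a ≠ 0 ∧ b ≠ 0 ∧ a < b ∧ w b < w a := by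
  simp [IS]

theorem sgen_lt (i : ℕ) (hi : 1 ≤ i) {a b : ℤ} (ha : a ≠ 0) (hb : b ≠ 0) (hab : a < b)
    (h1 : ¬ (a = i ∧ b = i + 1)) (h2 : ¬ (a = -((i : ℤ) + 1) ∧ b = -(i : ℤ))) :
    sgen i a < sgen i b := by
  simp only [sgen_apply i hi]
  split_ifs <;> omega

theorem tgen_lt {a b : ℤ} (ha : a ≠ 0) (hb : b ≠ 0) (hab : a < b)
    (h1 : ¬ (a = -1 ∧ b = 1)) : tgen a < tgen b := by
  simp only [tgen_apply]
  split_ifs <;> omega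

theorem sgen_i (i : ℕ) (hi : 1 ≤ i) : sgen i i = i + 1 := by simp [sgen_apply i hi]
theorem sgen_i1 (i : ℕ) (hi : 1 ≤ i) : sgen i (i + 1) = i := by simp [sgen_apply i hi]

theorem IS_sgen {n i : ℕ} {w : P} (hw : w ∈ Wset n) (hi : 1 ≤ i) (hin : i + 1 ≤ n)
    (h : w i < w (i + 1)) : (IS n (w * sgen i)).card = (IS n w).card + 2 := by
  have hs := sgen_mem n i hi hin
  have e1 := sgen_i i hi
  have e2 := sgen_i1 i hi
  have e3 : sgen i (-(i : ℤ)) = -((i : ℤ) + 1) := by rw [hs.1, e1]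
  have e4 : sgen i (-((i : ℤ) + 1)) = -(i : ℤ) := by rw [hs.1, e2]
  have f1 := hw.1 i
  have f2 := hw.1 (i + 1)
  have hsub : ({((i : ℤ), (i : ℤ) + 1), (-((i : ℤ) + 1), -(i : ℤ))} : Finset (ℤ × ℤ)) ⊆
      IS n (w * sgen i) := by
    intro p hp
    simp only [Finset.mem_insert, Finset.mem_singleton] at hp
    rcases hp with rfl | rfl <;> rw [mem_IS] <;>
      simp only [Equiv.Perm.mul_apply, e1, e2, e3, e4] <;> omega
  have hc2 : ({((i : ℤ), (i : ℤ) + 1), (-((i : ℤ) + 1), -(i : ℤ))} : Finset (ℤ × ℤ)).card = 2 := by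
    rw [Finset.card_pair]
    intro hh
    have := congrArg Prod.fst hh
    simp at this
    omega
  have key : (IS n w).card = (IS n (w * sgen i) \
      {((i : ℤ), (i : ℤ) + 1), (-((i : ℤ) + 1), -(i : ℤ))}).card := by
    apply Finset.card_nbij' (fun p => (sgen i p.1, sgen i p.2)) (fun p => (sgen i p.1, sgen i p.2))
    · rintro ⟨a, b⟩ hp
      have hp' := mem_IS.1 (Finset.mem_coe.1 hp)
      obtain ⟨⟨ba, bb⟩, ha, hb, hab, hwab⟩ := hp'
      have n1 : ¬ (a = i ∧ b = i + 1) := by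
        rintro ⟨rfl, rfl⟩; omega
      have n2 : ¬ (a = -((i : ℤ) + 1) ∧ b = -(i : ℤ)) := by
        rintro ⟨rfl, rfl⟩; omega
      have hlt := sgen_lt i hi ha hb hab n1 n2
      rw [Finset.mem_coe, Finset.mem_sdiff, mem_IS]
      refine ⟨⟨⟨bd_W hs ba.1 ba.2, bd_W hs bb.1 bb.2⟩, ne_zero_W hs ha, ne_zero_W hs hb, hlt, ?_⟩, ?_⟩
      · simpa [sgen_sgen i hi] using hwab
      · simp only [Finset.mem_insert, Finset.mem_singleton, Prod.mk.injEq, not_or]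
        refine ⟨?_, ?_⟩
        · rintro ⟨h1, h2⟩
          have h3 := sgen_sgen i hi a
          have h4 := sgen_sgen i hi b
          rw [h1, e1] at h3
          rw [h2, e2] at h4
          omega
        · rintro ⟨h1, h2⟩
          have h3 := sgen_sgen i hi a
          have h4 := sgen_sgen i hi b
          rw [h1, e4] at h3
          rw [h2, e3] at h4
          omega
    · rintro ⟨a, b⟩ hp
      rw [Finset.mem_coe, Finset.mem_sdiff, mem_IS] at hp
      simp only [Finset.mem_insert, Finset.mem_singleton, Prod.mk.injEq, not_or] at hp
      obtain ⟨⟨⟨ba, bb⟩, ha, hb, hab, hwab⟩, n1, n2⟩ := hp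
      rw [Finset.mem_coe, mem_IS]
      exact ⟨⟨bd_W hs ba.1 ba.2, bd_W hs bb.1 bb.2⟩, ne_zero_W hs ha, ne_zero_W hs hb,
        sgen_lt i hi ha hb hab n1 n2, hwab⟩
    · rintro ⟨a, b⟩ _
      simp [sgen_sgen i hi]
    · rintro ⟨a, b⟩ _
      simp [sgen_sgen i hi]
  have := Finset.card_sdiff_add_card_eq_card hsub
  omega

theorem IS_tgen {n : ℕ} {w : P} (hn : 1 ≤ n) (hw : w ∈ Wset n) 
    (h : 0 < w 1) : (IS n (w * tgen)).card = (IS n w).card + 1 := by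
  have hs := tgen_mem n hn
  have e1 : tgen 1 = -1 := by simp [tgen_apply]
  have e2 : tgen (-1) = 1 := by simp [tgen_apply]
  have f1 := hw.1 1
  have hsub : ({(-1, 1)} : Finset (ℤ × ℤ)) ⊆ IS n (w * tgen) := by
    intro p hp
    simp only [Finset.mem_singleton] at hp
    subst hp
    rw [mem_IS]
    simp only [Equiv.Perm.mul_apply, e1, e2]
    omega
  have key : (IS n w).card = (IS n (w * tgen) \ {(-1, 1)}).card := by
    apply Finset.card_nbij' (fun p => (tgen p.1, tgen p.2)) (fun p => (tgen p.1, tgen p.2))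
    · rintro ⟨a, b⟩ hp
      have hp' := mem_IS.1 (Finset.mem_coe.1 hp)
      obtain ⟨⟨ba, bb⟩, ha, hb, hab, hwab⟩ := hp'
      have n1 : ¬ (a = -1 ∧ b = 1) := by
        rintro ⟨rfl, rfl⟩; omega
      have hlt := tgen_lt ha hb hab n1
      rw [Finset.mem_coe, Finset.mem_sdiff, mem_IS]
      refine ⟨⟨⟨bd_W hs ba.1 ba.2, bd_W hs bb.1 bb.2⟩, ne_zero_W hs ha, ne_zero_W hs hb, hlt, ?_⟩, ?_⟩
      · simpa [tgen_tgen] using hwab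
      · simp only [Finset.mem_singleton, Prod.mk.injEq]
        rintro ⟨h1, h2⟩
        have h3 := tgen_tgen a
        have h4 := tgen_tgen b
        rw [h1, e2] at h3
        rw [h2, e1] at h4
        omega
    · rintro ⟨a, b⟩ hp
      rw [Finset.mem_coe, Finset.mem_sdiff, mem_IS] at hp
      simp only [Finset.mem_singleton, Prod.mk.injEq] at hp
      obtain ⟨⟨⟨ba, bb⟩, ha, hb, hab, hwab⟩, n1⟩ := hp
      rw [Finset.mem_coe, mem_IS]
      exact ⟨⟨bd_W hs ba.1 ba.2, bd_W hs bb.1 bb.2⟩, ne_zero_W hs ha, ne_zero_W hs hb,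
        tgen_lt ha hb hab n1, hwab⟩
    · rintro ⟨a, b⟩ _
      simp [tgen_tgen]
    · rintro ⟨a, b⟩ _
      simp [tgen_tgen]
  have := Finset.card_sdiff_add_card_eq_card hsub
  simp only [Finset.card_singleton] at this
  omega

/-- multiplying on the right by a positivity-preserving element keeps `ng`. -/
theorem ng_pos {n : ℕ} {w u : P} (hu : u ∈ Wset n) (hp : ∀ x, 0 < x → 0 < u x)
    (hp' : ∀ x, 0 < x → 0 < u⁻¹ x) : ng n (w * u) = ng n w := by
  unfold ng
  apply Finset.card_nbij' (fun x => u x) (fun x => u⁻¹ x)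
  · intro x hx
    rw [Finset.mem_coe, Finset.mem_filter, Finset.mem_Icc] at hx ⊢
    beta_reduce
    have := bd_W hu (x := x) (by omega) (by omega)
    have := hp x (by omega)
    exact ⟨⟨by omega, by omega⟩, hx.2⟩
  · intro x hx
    rw [Finset.mem_coe, Finset.mem_filter, Finset.mem_Icc] at hx ⊢
    beta_reduce
    have := bd_W (inv_mem hu) (x := x) (by omega) (by omega)
    have := hp' x (by omega)
    refine ⟨⟨by omega, by omega⟩, ?_⟩
    simpa using hx.2
  · intro x _; simp
  · intro x _; simp

theorem sgen_inv (i : ℕ) (hi : 1 ≤ i) : (sgen i)⁻¹ = sgen i :=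
  inv_eq_of_mul_eq_one_left (sgen_sq i hi)

theorem sgen_pos (i : ℕ) (hi : 1 ≤ i) (x : ℤ) (hx : 0 < x) : 0 < sgen i x := by
  simp only [sgen_apply i hi]
  split_ifs <;> omega

theorem ng_sgen {n i : ℕ} (w : P) (hi : 1 ≤ i) (hin : i + 1 ≤ n) :
    ng n (w * sgen i) = ng n w := by
  apply ng_pos (sgen_mem n i hi hin) (sgen_pos i hi)
  rw [sgen_inv i hi]
  exact sgen_pos i hi

theorem ng_tgen {n : ℕ} {w : P} (hn : 1 ≤ n) (hw : w ∈ Wset n) (h : 0 < w 1) :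
    ng n (w * tgen) = ng n w + 1 := by
  unfold ng
  rw [← Finset.card_insert_of_notMem (a := (1 : ℤ))]
  · congr 1
    ext x
    rw [Finset.mem_insert, Finset.mem_filter, Finset.mem_filter, Finset.mem_Icc, Equiv.Perm.mul_apply]
    have f1 := hw.1 1
    by_cases hx : x = 1
    · subst hx
      simp [tgen_apply, f1, h, hn]
    · simp only [hx, false_or]
      refine and_congr_right fun hx2 => ?_
      have : tgen x = x := by
        rw [tgen_apply, if_neg hx, if_neg (by omega)]
      rw [this]
  · simp; omega

theorem M_sgen {n i : ℕ} {w : P} (hw : w ∈ Wset n) (hi : 1 ≤ i) (hin : i + 1 ≤ n)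
    (h : w i < w (i + 1)) : M n (w * sgen i) = M n w + 2 := by
  unfold M; rw [IS_sgen hw hi hin h, ng_sgen w hi hin]; omega

theorem M_tgen {n : ℕ} {w : P} (hn : 1 ≤ n) (hw : w ∈ Wset n) (h : 0 < w 1) :
    M n (w * tgen) = M n w + 2 := by
  unfold M; rw [IS_tgen hn hw h, ng_tgen hn hw h]; omega

theorem M_sgen' {n i : ℕ} {w : P} (hw : w ∈ Wset n) (hi : 1 ≤ i) (hin : i + 1 ≤ n)
    (h : ¬ w i < w (i + 1)) : M n (w * sgen i) + 2 = M n w := by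
  have h1 : w i ≠ w (i + 1) := fun h => by have := w.injective h; omega
  have := M_sgen (w := w * sgen i) (mul_mem hw (sgen_mem n i hi hin)) hi hin (by
    simp only [Equiv.Perm.mul_apply, sgen_i i hi, sgen_i1 i hi]; omega)
  rw [mul_assoc, sgen_sq i hi, mul_one] at this
  omega

theorem M_tgen' {n : ℕ} {w : P} (hn : 1 ≤ n) (hw : w ∈ Wset n) (h : ¬ 0 < w 1) :
    M n (w * tgen) + 2 = M n w := by
  have h1 : w 1 ≠ 0 := ne_zero_W hw (by norm_num)
  have := M_tgen (w := w * tgen) hn (mul_mem hw (tgen_mem n hn)) (by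
    have : tgen 1 = -1 := by simp [tgen_apply]
    simp only [Equiv.Perm.mul_apply, this, hw.1]; omega)
  rw [mul_assoc, tgen_sq, mul_one] at this
  omega

theorem M_one (n : ℕ) : M n 1 = 0 := by
  have h1 : IS n 1 = ∅ := by
    rw [Finset.eq_empty_iff_forall_notMem]
    rintro ⟨a, b⟩ h
    have := mem_IS.1 h
    simp at this
    omega
  have h2 : ng n 1 = 0 := by
    unfold ng
    rw [Finset.card_eq_zero, Finset.filter_eq_empty_iff]
    intro x hx
    simp at hx ⊢
    omega
  simp [M, h1, h2]

/-- no descents implies identity -/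
theorem eq_one_of_no_desc {n : ℕ} {w : P} (hw : w ∈ Wset n) (h0 : 1 ≤ n → 0 < w 1)
    (h : ∀ i : ℕ, 1 ≤ i → i + 1 ≤ n → w i < w (i + 1)) : w = 1 := by
  have lo : ∀ i : ℕ, 1 ≤ i → i ≤ n → (i : ℤ) ≤ w i := by
    intro i hi
    induction i, hi using Nat.le_induction with
    | base => intro hn; have := h0 hn; push_cast; omega
    | succ k hk ih =>
      intro hn
      have := h k hk hn
      have := ih (by omega)
      push_cast; omega
  have hiw : ∀ k i : ℕ, 1 ≤ i → i + k = n → w i ≤ i := by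
    intro k
    induction k with
    | zero =>
      intro i hi hk
      have := bd_W hw (x := i) (by omega) (by omega)
      omega
    | succ k ih =>
      intro i hi hk
      have h1 := ih (i + 1) (by omega) (by omega)
      have h2 := h i hi (by omega)
      push_cast at h1; omega
  have pos : ∀ x : ℤ, 0 < x → w x = x := by
    intro x hx
    by_cases hxn : x ≤ n
    · obtain ⟨i, rfl⟩ := Int.eq_ofNat_of_zero_le hx.le
      have := lo i (by omega) (by omega)
      have := hiw (n - i) i (by omega) (by omega)
      omega
    · exact hw.2 x (by rw [lt_abs]; omega)
  ext x
  simp only [Equiv.Perm.one_apply]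
  rcases lt_trichotomy x 0 with hx | hx | hx
  · have := pos (-x) (by omega)
    rw [hw.1] at this; omega
  · rw [hx, zero_W hw]
  · exact pos x hx

theorem mem_Sset {n : ℕ} {g : P} : g ∈ Sset n ↔ g = tgen ∨ ∃ i, 1 ≤ i ∧ i ≤ n - 1 ∧ sgen i = g := by
  simp [Sset, and_assoc]

theorem gen_mem {n : ℕ} (hn : 1 ≤ n) {g : P} (hg : g ∈ Sset n) : g ∈ Wset n := by
  rcases mem_Sset.1 hg with rfl | ⟨i, h1, h2, rfl⟩
  · exact tgen_mem n hn
  · exact sgen_mem n i h1 (by omega)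

theorem M_gen_le {n : ℕ} (hn : 1 ≤ n) {w g : P} (hw : w ∈ Wset n) (hg : g ∈ Sset n) :
    M n (w * g) ≤ M n w + 2 := by
  rcases mem_Sset.1 hg with rfl | ⟨i, h1, h2, rfl⟩
  · by_cases h : 0 < w 1
    · rw [M_tgen hn hw h]
    · have := M_tgen' hn hw h; omega
  · by_cases h : w i < w (i + 1)
    · rw [M_sgen hw h1 (by omega) h]
    · have := M_sgen' hw h1 (by omega) h; omega

theorem word_mem {n : ℕ} (hn : 1 ≤ n) (L : List P) (hL : ∀ g ∈ L, g ∈ Sset n) :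
    L.prod ∈ Wset n := by
  induction L with
  | nil => simpa using one_mem n
  | cons a L ih =>
    rw [List.prod_cons]
    exact mul_mem (gen_mem hn (hL a (by simp))) (ih fun g hg => hL g (by simp [hg]))

theorem M_word_le {n : ℕ} (hn : 1 ≤ n) (L : List P) (hL : ∀ g ∈ L, g ∈ Sset n) :
    M n L.prod ≤ 2 * L.length := by
  induction L using List.reverseRecOn with
  | nil => simp [M_one]
  | append_singleton L g ih =>
    have hL' : ∀ g ∈ L, g ∈ Sset n := fun g hg => hL g (by simp [hg])
    have := M_gen_le hn (word_mem hn L hL') (hL g (by simp))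
    have := ih hL'
    simp only [List.prod_append, List.prod_singleton, List.length_append, List.length_singleton]
    omega

theorem exists_word {n : ℕ} (hn : 1 ≤ n) : ∀ (k : ℕ) (w : P), w ∈ Wset n → M n w ≤ k →
    ∃ L : List P, (∀ g ∈ L, g ∈ Sset n) ∧ L.prod = w ∧ 2 * L.length = M n w := by
  intro k
  induction k using Nat.strong_induction_on with
  | _ k ih =>
  intro w hw hk
  have step : ∀ g, g ∈ Sset n → g * g = 1 → M n (w * g) + 2 = M n w →
      ∃ L : List P, (∀ g ∈ L, g ∈ Sset n) ∧ L.prod = w ∧ 2 * L.length = M n w := by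
    intro g hg hgg hM
    obtain ⟨L, h1, h2, h3⟩ := ih (M n (w * g)) (by omega) _ (mul_mem hw (gen_mem hn hg)) le_rfl
    refine ⟨L ++ [g], ?_, ?_, ?_⟩
    · intro x hx
      simp only [List.mem_append, List.mem_singleton] at hx
      rcases hx with hx | rfl
      · exact h1 x hx
      · exact hg
    · simp [h2, mul_assoc, hgg]
    · simp; omega
  by_cases h0 : 0 < w 1
  · by_cases h : ∀ i : ℕ, 1 ≤ i → i + 1 ≤ n → w i < w (i + 1)
    · have := eq_one_of_no_desc hw (fun _ => h0) h
      subst this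
      exact ⟨[], by simp, by simp, by simp [M_one]⟩
    · push Not at h
      obtain ⟨i, hi, hin, h⟩ := h
      exact step (sgen i) (mem_Sset.2 (Or.inr ⟨i, hi, by omega, rfl⟩)) (sgen_sq i hi)
        (M_sgen' hw hi hin (not_lt.2 h))
  · exact step tgen (mem_Sset.2 (Or.inl rfl)) tgen_sq (M_tgen' hn hw h0)

theorem len_eq {n : ℕ} (hn : 1 ≤ n) {w : P} (hw : w ∈ Wset n) : 2 * len n w = M n w := by
  obtain ⟨L, h1, h2, h3⟩ := exists_word hn _ w hw le_rfl
  have hle : len n w ≤ L.length := Nat.sInf_le ⟨L, h1, h2, rfl⟩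
  have hmem : len n w ∈ {k | ∃ l : List P, (∀ g ∈ l, g ∈ Sset n) ∧ l.prod = w ∧ l.length = k} :=
    Nat.sInf_mem ⟨_, L, h1, h2, rfl⟩
  obtain ⟨L', g1, g2, g3⟩ := hmem
  have := M_word_le hn L' g1
  rw [g2] at this
  omega

theorem sgen_ne_tgen (i : ℕ) (hi : 1 ≤ i) : sgen i ≠ tgen := by
  intro h
  have := sgen_pos i hi 1 (by norm_num)
  rw [h, tgen_apply] at this
  simp at this

theorem tcount_eq {n : ℕ} (hn : 1 ≤ n) (L : List P) (hL : ∀ g ∈ L, g ∈ Sset n)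
    (h : M n L.prod = 2 * L.length) : tcount L = ng n L.prod := by
  induction L using List.reverseRecOn with
  | nil =>
    have := M_one n
    unfold M at this
    simp [tcount]; omega
  | append_singleton L g ih =>
    have hL' : ∀ g ∈ L, g ∈ Sset n := fun g hg => hL g (by simp [hg])
    have hg := hL g (by simp)
    have hw := word_mem hn L hL'
    have h1 := M_word_le hn L hL'
    have h2 := M_gen_le hn hw hg
    simp only [List.prod_append, List.prod_singleton, List.length_append,
      List.length_singleton] at h ⊢
    have h3 := ih hL' (by omega)
    have h4 : tcount (L ++ [g]) = tcount L + if g = tgen then 1 else 0 := by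
      simp [tcount]
    rw [h4, h3]
    rcases mem_Sset.1 hg with rfl | ⟨i, hi, hi2, rfl⟩
    · have hpos : 0 < L.prod 1 := by
        by_contra hc
        have := M_tgen' hn hw hc
        omega
      rw [ng_tgen hn hw hpos]; simp
    · rw [ng_sgen _ hi (by omega), if_neg (sgen_ne_tgen i hi)]; simp

theorem tlen_eq {n : ℕ} (hn : 1 ≤ n) {w : P} (hw : w ∈ Wset n) : tlen n w = ng n w := by
  obtain ⟨L, h1, h2, h3⟩ := exists_word hn _ w hw le_rfl
  have hlen := len_eq hn hw
  have hmem : tlen n w ∈ {k | ∃ l : List P, (∀ g ∈ l, g ∈ Sset n) ∧ l.prod = w ∧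
    l.length = len n w ∧ tcount l = k} := Nat.sInf_mem ⟨_, L, h1, h2, by omega, rfl⟩
  obtain ⟨L', g1, g2, g3, g4⟩ := hmem
  rw [← g4, tcount_eq hn L' g1 (by rw [g2]; omega), g2]

theorem SymN_eq (n : ℕ) : SymN n = SymLR n n := by
  unfold SymN SymLR
  congr 2
  ext i
  simp only [Set.mem_Icc, Set.mem_setOf_eq]
  omega

theorem SymLR_le (n l : ℕ) : SymLR n l ≤ SymN n := by
  apply Subgroup.closure_mono
  apply Set.image_mono
  rintro i ⟨h1, h2, _⟩
  exact ⟨h1, h2⟩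

theorem SymLR_prop {n l : ℕ} {u : P} (hu : u ∈ SymLR n l) :
    u ∈ Wset n ∧ ∀ x : ℤ, (0 < u x ↔ 0 < x) ∧ ((-(l : ℤ) ≤ u x ∧ u x ≤ l) ↔ (-(l : ℤ) ≤ x ∧ x ≤ l)) := by
  unfold SymLR at hu
  induction hu using Subgroup.closure_induction with
  | mem g hg =>
    obtain ⟨i, ⟨h1, h2, h3⟩, rfl⟩ := hg
    refine ⟨sgen_mem n i h1 (by omega), fun x => ?_⟩
    rw [sgen_apply i h1]
    split_ifs <;> omega
  | one => exact ⟨one_mem n, fun x => by simp⟩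
  | mul a b _ _ ha hb =>
    refine ⟨mul_mem ha.1 hb.1, fun x => ?_⟩
    rw [Equiv.Perm.mul_apply, (ha.2 _).1, (ha.2 _).2, (hb.2 _).1, (hb.2 _).2]
    simp
  | inv a _ ha =>
    refine ⟨inv_mem ha.1, fun x => ?_⟩
    have := ha.2 (a⁻¹ x)
    rw [← Equiv.Perm.mul_apply, mul_inv_cancel, Equiv.Perm.one_apply] at this
    exact ⟨this.1.symm, this.2.symm⟩

/-- increasing on blocks -/
theorem incr {n l : ℕ} {w : P}
    (h : ∀ i : ℕ, 1 ≤ i → i ≤ n - 1 → i ≠ l → w i < w (i + 1)) (k : ℕ) :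
    ∀ a b : ℤ, 0 < a → b ≤ n → b = a + 1 + k → (b ≤ l ∨ (l : ℤ) < a) → w a < w b := by
  induction k with
  | zero =>
    intro a b ha hb hab hl
    obtain ⟨i, rfl⟩ := Int.eq_ofNat_of_zero_le ha.le
    have := h i (by omega) (by omega) (by omega)
    have e : b = (i : ℤ) + 1 := by omega
    rw [e]; exact this
  | succ k ih =>
    intro a b ha hb hab hl
    have h1 := ih a (b - 1) ha (by omega) (by push_cast at hab; omega) (by omega)
    obtain ⟨i, hi⟩ := Int.eq_ofNat_of_zero_le (a := b - 1) (by push_cast at hab; omega)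
    have := h i (by omega) (by omega) (by omega)
    have e : b = (i : ℤ) + 1 := by omega
    rw [hi] at h1
    rw [e]; exact h1.trans this

theorem incr' {n l : ℕ} {w : P}
    (h : ∀ i : ℕ, 1 ≤ i → i ≤ n - 1 → i ≠ l → w i < w (i + 1)) 
    {a b : ℤ} (ha : 0 < a) (hab : a < b) (hb : b ≤ n) (hl : b ≤ l ∨ (l : ℤ) < a) : w a < w b :=
  incr h (b - a - 1).toNat a b ha hb (by omega) hl

theorem min_iff {n l : ℕ} (hn : 1 ≤ n) {w : P} (hw : w ∈ Wset n) :
    (∀ u ∈ SymLR n l, len n w ≤ len n (w * u)) ↔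
      ∀ i : ℕ, 1 ≤ i → i ≤ n - 1 → i ≠ l → w i < w (i + 1) := by
  constructor
  · intro h i hi hin hil
    by_contra hc
    have hs := sgen_mem n i hi (by omega)
    have h1 := M_sgen' hw hi (by omega) hc
    have h2 := h (sgen i) (Subgroup.subset_closure ⟨i, ⟨hi, hin, hil⟩, rfl⟩)
    have h3 := len_eq hn hw
    have h4 := len_eq hn (mul_mem hw hs)
    omega
  · intro h u hu
    have hp := SymLR_prop hu
    have hq := SymLR_prop ((SymLR n l).inv_mem hu)
    have h3 := len_eq hn hw
    have h4 := len_eq hn (mul_mem hw hp.1)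
    have h5 : ng n (w * u) = ng n w :=
      ng_pos hp.1 (fun x hx => (hp.2 x).1.2 hx) (fun x hx => (hq.2 x).1.2 hx)
    have h6 : (IS n w).card ≤ (IS n (w * u)).card := by
      apply Finset.card_le_card_of_injOn (fun p => (u⁻¹ p.1, u⁻¹ p.2))
      · rintro ⟨a, b⟩ hab
        rw [Finset.mem_coe, mem_IS] at hab
        obtain ⟨⟨ba, bb⟩, ha, hb, hab, hwab⟩ := hab
        rw [Finset.mem_coe, mem_IS]
        refine ⟨⟨bd_W hq.1 ba.1 ba.2, bd_W hq.1 bb.1 bb.2⟩, ne_zero_W hq.1 ha, ne_zero_W hq.1 hb,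
          ?_, by simpa using hwab⟩
        have qa := hq.2 a
        have qb := hq.2 b
        have na := ne_zero_W hq.1 ha
        have nb := ne_zero_W hq.1 hb
        have c1 : ¬ (0 < a ∧ (b ≤ l ∨ (l : ℤ) < a)) := by
          rintro ⟨c, d⟩
          have := incr' h c hab bb.2 d
          omega
        have c2 : ¬ (b < 0 ∧ (-a ≤ l ∨ (l : ℤ) < -b)) := by
          rintro ⟨c, d⟩
          have := incr' h (a := -b) (b := -a) (by omega) (by omega) (by omega) d
          rw [hw.1, hw.1] at this
          omega
        show u⁻¹ a < u⁻¹ b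
        omega
      · rintro ⟨a, b⟩ _ ⟨c, d⟩ _ hh
        simpa using hh
    unfold M at h3 h4
    omega

theorem mem_SymN {n : ℕ} (hn : 1 ≤ n) : ∀ (k : ℕ) (w : P), w ∈ Wset n → 
    (∀ x, 0 < x → 0 < w x) → M n w ≤ k → w ∈ SymN n := by
  intro k
  induction k using Nat.strong_induction_on with
  | _ k ih =>
  intro w hw hpos hk
  by_cases h : ∀ i : ℕ, 1 ≤ i → i + 1 ≤ n → w i < w (i + 1)
  · have := eq_one_of_no_desc hw (fun _ => hpos 1 (by norm_num)) h
    subst this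
    exact Subgroup.one_mem _
  · push Not at h
    obtain ⟨i, hi, hin, h⟩ := h
    have h1 := M_sgen' hw hi hin (not_lt.2 h)
    have hs : sgen i ∈ SymN n := Subgroup.subset_closure ⟨i, ⟨hi, by omega⟩, rfl⟩
    have h2 := ih (M n (w * sgen i)) (by omega) _ (mul_mem hw (sgen_mem n i hi hin))
      (fun x hx => hpos _ (sgen_pos i hi x hx)) le_rfl
    exact (Subgroup.mul_mem_cancel_right _ hs).1 h2

theorem rgen_apply (l : ℕ) (x : ℤ) : rgen (l + 1) x =
    if x = 1 then -((l : ℤ) + 1) else if x = -1 then (l : ℤ) + 1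
    else if 2 ≤ x ∧ x ≤ l + 1 then x - 1
    else if -((l : ℤ) + 1) ≤ x ∧ x ≤ -2 then x + 1 else x := by
  induction l with
  | zero =>
    simp only [rgen, tgen_apply]
    split_ifs <;> omega
  | succ l ih =>
    rw [rgen, Equiv.Perm.mul_apply, ih, sgen_apply _ (by omega)]
    push_cast
    split_ifs <;> omega

theorem al_apply (l : ℕ) (x : ℤ) : al l x =
    if 1 ≤ x ∧ x ≤ l then x - l - 1 else if -(l : ℤ) ≤ x ∧ x ≤ -1 then x + l + 1 else x := by
  induction l generalizing x with
  | zero =>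
    simp only [al, List.range_zero, List.map_nil, List.prod_nil, Equiv.Perm.one_apply]
    split_ifs <;> omega
  | succ l ih =>
    have : al (l + 1) = al l * rgen (l + 1) := by
      simp [al, List.range_succ]
    rw [this, Equiv.Perm.mul_apply, ih, rgen_apply]
    push_cast
    split_ifs <;> omega

theorem al_al (l : ℕ) : al l * al l = 1 := by
  ext x
  simp only [Equiv.Perm.mul_apply, al_apply, Equiv.Perm.one_apply]
  split_ifs <;> omega

theorem al_mem {n l : ℕ} (hl : l ≤ n) : al l ∈ Wset n := by
  refine ⟨fun x => ?_, fun x hx => ?_⟩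
  · simp only [al_apply]
    split_ifs <;> omega
  · rw [lt_abs] at hx
    simp only [al_apply]
    split_ifs <;> omega

theorem mem_Y {n l : ℕ} (hn : 1 ≤ n) {w : P} : w ∈ Yset n l ↔
    (w ∈ Wset n ∧ ∀ x, 0 < x → 0 < w x) ∧
      ∀ i : ℕ, 1 ≤ i → i ≤ n - 1 → i ≠ l → w i < w (i + 1) := by
  constructor
  · rintro ⟨h1, h2⟩
    rw [SymN_eq] at h1
    have hp := SymLR_prop h1
    exact ⟨⟨hp.1, fun x hx => (hp.2 x).1.2 hx⟩, (min_iff hn hp.1).1 h2⟩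
  · rintro ⟨⟨h1, h2⟩, h3⟩
    exact ⟨mem_SymN hn _ w h1 h2 le_rfl, (min_iff hn h1).2 h3⟩

theorem mem_Xl {n l : ℕ} (hn : 1 ≤ n) {w : P} : w ∈ Xl n l ↔
    (w ∈ Wset n ∧ ∀ i : ℕ, 1 ≤ i → i ≤ n - 1 → i ≠ n → w i < w (i + 1)) ∧ ng n w = l := by
  constructor
  · rintro ⟨⟨h1, h2⟩, h3⟩
    rw [tlen_eq hn h1] at h3
    rw [SymN_eq] at h2
    exact ⟨⟨h1, (min_iff hn h1).1 h2⟩, h3⟩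
  · rintro ⟨⟨h1, h2⟩, h3⟩
    refine ⟨⟨h1, ?_⟩, ?_⟩
    · rw [SymN_eq]; exact (min_iff hn h1).2 h2
    · rw [tlen_eq hn h1, h3]

theorem maps {n l : ℕ} (hn : 1 ≤ n) (hl : l ≤ n) {w : P} (h : w ∈ Yset n l) :
    w * al l ∈ Xl n l := by
  obtain ⟨⟨hw, hpos⟩, hinc⟩ := (mem_Y hn).1 h
  rw [mem_Xl hn]
  have v1 : ∀ x : ℤ, 1 ≤ x → x ≤ l → (w * al l) x = - w (l + 1 - x) := by
    intro x h1 h2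
    rw [Equiv.Perm.mul_apply, al_apply, if_pos ⟨h1, h2⟩, ← hw.1]
    congr 1; ring
  have v2 : ∀ x : ℤ, (l : ℤ) < x → (w * al l) x = w x := by
    intro x h1
    rw [Equiv.Perm.mul_apply, al_apply, if_neg (by omega), if_neg (by omega)]
  refine ⟨⟨mul_mem hw (al_mem hl), ?_⟩, ?_⟩
  · intro i hi hin _
    rcases lt_trichotomy i l with hil | hil | hil
    · rw [v1 _ (by omega) (by omega), v1 _ (by omega) (by omega)]
      have := incr' hinc (a := (l : ℤ) + 1 - (i + 1)) (b := l + 1 - i) (by omega) (by omega)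
        (by omega) (by omega)
      omega
    · rw [v1 _ (by omega) (by omega), v2 _ (by omega)]
      have := hpos ((l : ℤ) + 1 - i) (by omega)
      have := hpos ((i : ℤ) + 1) (by omega)
      omega
    · rw [v2 _ (by omega), v2 _ (by omega)]
      exact hinc i hi hin (by omega)
  · have : (Finset.Icc (1 : ℤ) n).filter (fun j => (w * al l) j < 0) = Finset.Icc (1 : ℤ) l := by
      ext x
      simp only [Finset.mem_filter, Finset.mem_Icc]
      constructor
      · rintro ⟨⟨h1, h2⟩, h3⟩
        refine ⟨h1, ?_⟩
        by_contra hc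
        rw [v2 x (by omega)] at h3
        have := hpos x (by omega)
        omega
      · rintro ⟨h1, h2⟩
        refine ⟨⟨h1, by omega⟩, ?_⟩
        rw [v1 x h1 h2]
        have := hpos ((l : ℤ) + 1 - x) (by omega)
        omega
    unfold ng
    rw [this]
    simp

theorem maps' {n l : ℕ} (hn : 1 ≤ n) (hl : l ≤ n) {w : P} (h : w ∈ Xl n l) :
    w * al l ∈ Yset n l := by
  obtain ⟨⟨hw, hinc⟩, hng⟩ := (mem_Xl hn).1 h
  rw [mem_Y hn]
  have v1 : ∀ x : ℤ, 1 ≤ x → x ≤ l → (w * al l) x = - w (l + 1 - x) := by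
    intro x h1 h2
    rw [Equiv.Perm.mul_apply, al_apply, if_pos ⟨h1, h2⟩, ← hw.1]
    congr 1; ring
  have v2 : ∀ x : ℤ, (l : ℤ) < x → (w * al l) x = w x := by
    intro x h1
    rw [Equiv.Perm.mul_apply, al_apply, if_neg (by omega), if_neg (by omega)]
  have inc : ∀ a b : ℤ, 0 < a → a < b → b ≤ n → w a < w b := fun a b h1 h2 h3 =>
    incr' hinc h1 h2 h3 (Or.inl h3)
  unfold ng at hng
  have hneg : ∀ x : ℤ, 1 ≤ x → x ≤ l → w x < 0 := by
    intro x h1 h2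
    by_contra hc
    have hsub : (Finset.Icc (1 : ℤ) n).filter (fun j => w j < 0) ⊆ Finset.Icc 1 (x - 1) := by
      intro y hy
      simp only [Finset.mem_filter, Finset.mem_Icc] at hy ⊢
      refine ⟨hy.1.1, ?_⟩
      by_contra hd
      rcases (show x = y ∨ x < y by omega) with rfl | hxy
      · omega
      · have := inc x y (by omega) hxy hy.1.2
        omega
    have := Finset.card_le_card hsub
    rw [Int.card_Icc] at this
    omega
  have hpos : ∀ x : ℤ, (l : ℤ) < x → 0 < w x := by
    intro x h1
    by_cases hx : x ≤ n
    · by_contra hc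
      have hsub : Finset.Icc 1 x ⊆ (Finset.Icc (1 : ℤ) n).filter (fun j => w j < 0) := by
        intro y hy
        simp only [Finset.mem_filter, Finset.mem_Icc] at hy ⊢
        refine ⟨⟨hy.1, by omega⟩, ?_⟩
        have := ne_zero_W hw (x := x) (by omega)
        rcases (show y = x ∨ y < x by omega) with rfl | hxy
        · omega
        · have := inc y x (by omega) hxy hx
          omega
      have := Finset.card_le_card hsub
      rw [Int.card_Icc] at this
      omega
    · rw [hw.2 x (by rw [lt_abs]; omega)]; omega
  refine ⟨⟨mul_mem hw (al_mem hl), ?_⟩, ?_⟩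
  · intro x hx
    by_cases hxl : x ≤ l
    · rw [v1 x hx hxl]
      have := hneg ((l : ℤ) + 1 - x) (by omega) (by omega)
      omega
    · rw [v2 x (by omega)]
      exact hpos x (by omega)
  · intro i hi hin hil
    rcases Nat.lt_or_gt_of_ne hil with hil | hil
    · rw [v1 _ (by omega) (by omega), v1 _ (by omega) (by omega)]
      have := inc ((l : ℤ) + 1 - (i + 1)) (l + 1 - i) (by omega) (by omega) (by omega)
      omega
    · rw [v2 _ (by omega), v2 _ (by omega)]
      exact hinc i hi hin (by omega)

end YAl

/-- For `0 ≤ l ≤ n`, the map `Y_{l,n-l} → X_n^{(l)}`, `w ↦ w a_l`,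
is a bijection. -/
theorem Y_mul_al_bij (n l : ℕ) (hn : 1 ≤ n) (hl : l ≤ n) :
    Set.BijOn (fun w => w * al l) (Yset n l) (Xl n l) := by
  refine ⟨fun w hw => YAl.maps hn hl hw, fun a _ b _ h => mul_right_cancel h, fun w hw => ?_⟩
  refine ⟨w * al l, YAl.maps' hn hl hw, ?_⟩
  simp [mul_assoc, YAl.al_al]
end
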